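/- Let N be a continuous nest on a separable infinite-dimensional complex Hilbert space and let I be a stable ideal of Alg N. For each X ∈ I and ε > 0 let P_{X,ε} denote the set of all intervals E of N with ‖EXE‖_e < ε. Then O := {P_{X,ε} : X ∈ I, ε > 0} is a stable net of intervals of N: it is directed under refinement, and θ(P) ∈ O for every P ∈ O and every order automorphism θ of N. -/

import Mathlib

open Set Filter Topology

noncomputable def essNorm {H : Type*} [NormedAddCommGroup H] [InnerProductSpace ℂ H]
    [CompleteSpace H] (T : H →L[ℂ] H) : ℝ :=
  Metric.infDist T {K : H →L[ℂ] H | IsCompactOperator ⇑K}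

/-- A continuous nest on `H`, parameterized by `[0,1]`: an increasing family of orthogonal
projections `N t` whose ranges strictly increase, with `N 0 = 0`, `N 1 = 1`, and
`t ↦ N t ξ` norm-continuous on `[0,1]` for every `ξ`. -/
structure ContinuousNest (H : Type*) [NormedAddCommGroup H] [InnerProductSpace ℂ H]
    [CompleteSpace H] where
  N : ℝ → H →L[ℂ] H
  idem : ∀ t ∈ Icc (0 : ℝ) 1, IsIdempotentElem (N t)
  selfAdjoint : ∀ t ∈ Icc (0 : ℝ) 1, IsSelfAdjoint (N t)
  range_lt : ∀ s t : ℝ, s ∈ Icc (0 : ℝ) 1 → t ∈ Icc (0 : ℝ) 1 → s < t →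
    LinearMap.range (N s).toLinearMap < LinearMap.range (N t).toLinearMap
  N_zero : N 0 = 0
  N_one : N 1 = 1
  contOn : ∀ ξ : H, ContinuousOn (fun t => N t ξ) (Icc (0 : ℝ) 1)

variable {H : Type*} [NormedAddCommGroup H] [InnerProductSpace ℂ H] [CompleteSpace H]

/-- `P₁` refines `P₂`: every interval of `P₁` is dominated by an interval of `P₂`
(in the Loewner order). -/
def OpRefines (P₁ P₂ : Set (H →L[ℂ] H)) : Prop :=
  ∀ E ∈ P₁, ∃ F ∈ P₂, ContinuousLinearMap.IsPositive (F - E)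

namespace ContinuousNest

variable (𝒩 : ContinuousNest H)

/-- The nest algebra of `𝒩`. -/
def alg : Set (H →L[ℂ] H) := {T | ∀ t ∈ Icc (0 : ℝ) 1, (1 - 𝒩.N t) * T * 𝒩.N t = 0}

/-- An interval of the nest: a difference `N t - N s` with `0 ≤ s ≤ t ≤ 1`. -/
def IsInterval (E : H →L[ℂ] H) : Prop :=
  ∃ s t : ℝ, 0 ≤ s ∧ s ≤ t ∧ t ≤ 1 ∧ E = 𝒩.N t - 𝒩.N s

def IsIntervalFamily (P : Set (H →L[ℂ] H)) : Prop := ∀ E ∈ P, 𝒩.IsInterval E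

/-- A net of families of intervals: directed under refinement. -/
def IsNet (O : Set (Set (H →L[ℂ] H))) : Prop :=
  (∀ P ∈ O, 𝒩.IsIntervalFamily P) ∧
  ∀ P ∈ O, ∀ Q ∈ O, ∃ R ∈ O, OpRefines R P ∧ OpRefines R Q

def nestSet : Set (H →L[ℂ] H) := 𝒩.N '' Icc (0 : ℝ) 1

/-- An order automorphism of the nest: an order-preserving bijection of `{N t : t ∈ [0,1]}`
onto itself. -/
def IsAuto (θ : (H →L[ℂ] H) → H →L[ℂ] H) : Prop :=
  Set.BijOn θ 𝒩.nestSet 𝒩.nestSet ∧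
  ∀ s t : ℝ, s ∈ Icc (0 : ℝ) 1 → t ∈ Icc (0 : ℝ) 1 → s ≤ t →
    ContinuousLinearMap.IsPositive (θ (𝒩.N t) - θ (𝒩.N s))

/-- The image family `θ(P) = {θ(N t) - θ(N s) : N t - N s ∈ P}`. -/
def autoImage (θ : (H →L[ℂ] H) → H →L[ℂ] H) (P : Set (H →L[ℂ] H)) : Set (H →L[ℂ] H) :=
  {E | ∃ s t : ℝ, 0 ≤ s ∧ s ≤ t ∧ t ≤ 1 ∧ 𝒩.N t - 𝒩.N s ∈ P ∧ E = θ (𝒩.N t) - θ (𝒩.N s)}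

/-- A stable net of intervals. -/
def IsStableNet (O : Set (Set (H →L[ℂ] H))) : Prop :=
  𝒩.IsNet O ∧ ∀ θ, 𝒩.IsAuto θ → ∀ P ∈ O, 𝒩.autoImage θ P ∈ O

/-- The kernel of a net `O`: those `X` in the nest algebra with
`lim_{P ∈ O} sup_{E ∈ P} ‖EXE‖ₑ = 0`; since the sup decreases under refinement, this limit
is `0` iff for every `ε > 0` some `P ∈ O` has all `‖EXE‖ₑ < ε`. -/
def kernel (O : Set (Set (H →L[ℂ] H))) : Set (H →L[ℂ] H) :=
  {X | X ∈ 𝒩.alg ∧ ∀ ε : ℝ, 0 < ε → ∃ P ∈ O, ∀ E ∈ P, essNorm (E * X * E) < ε}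

/-- A two-sided ideal of the nest algebra. -/
def IsIdeal (I : Set (H →L[ℂ] H)) : Prop :=
  I ⊆ 𝒩.alg ∧ (0 : H →L[ℂ] H) ∈ I ∧
  (∀ X ∈ I, ∀ Y ∈ I, X + Y ∈ I) ∧ (∀ X ∈ I, -X ∈ I) ∧
  ∀ A ∈ 𝒩.alg, ∀ X ∈ I, A * X ∈ I ∧ X * A ∈ I

/-- A stable ideal: a norm-closed two-sided ideal invariant under every automorphism
`T ↦ S T S⁻¹` of the nest algebra implemented by an invertible `S ∈ B(H)`. -/
def IsStableIdeal (I : Set (H →L[ℂ] H)) : Prop :=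
  𝒩.IsIdeal I ∧ IsClosed I ∧
  ∀ S : (H →L[ℂ] H)ˣ,
    (fun T => (↑S : H →L[ℂ] H) * T * (↑S⁻¹ : H →L[ℂ] H)) '' 𝒩.alg = 𝒩.alg →
    (fun T => (↑S : H →L[ℂ] H) * T * (↑S⁻¹ : H →L[ℂ] H)) '' I = I

end ContinuousNest

/-!
The projections of a continuous nest carry a unit vector `x` along a path with the covariance of
Brownian motion, and shifting the increments of such a path by two grid steps is strictly
triangular while almost fixing `x`. Averaging asymptotically orthogonal skew parts makes such an
operator `T` almost selfadjoint, so that the inverses of `1 ± c T` with `c` imaginary are bounded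
by `2` for large `c` and small on `x`. Telescoping products of these inverses yields a factorisation
`1 = ∑ (L' n * L n)` into strictly triangular factors with `L' n` close to the adjoint of `L n`, up
to small errors of finite rank. Composing with partial isometries `V n` whose ranges are mutually
orthogonal and sit in short intervals of another nest gives `A = ∑ V n L n` and
`B = ∑ L' n (V n)*`: a triangular embedding with a triangular left inverse, isometric modulo the
compact operators.

Two embeddings of the nest into itself with orthogonal ranges combine `X` and `Y` into one member of
the ideal, `Z = A₁ X B₁ + A₂ Y B₂`, which dominates both in essential norm on every interval. This
gives directedness. For stability, an order automorphism is a reparametrisation of the nest.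
Embedding amplifications and using Pełczyński's decomposition method, a similarity carries the nest
to its reparametrisation, and conjugation by it shows that `A X B` lies in the ideal, where `A`, `B`
embed the nest into its reparametrisation. As `A` is an isometry modulo the compact operators, `X`
and `A X B` have the same essential norm on corresponding intervals.
-/

section FiniteRank

open InnerProductSpace ContinuousLinearMap

variable {E F G : Type*} [NormedAddCommGroup E] [InnerProductSpace ℂ E]
  [NormedAddCommGroup F] [InnerProductSpace ℂ F] [NormedAddCommGroup G] [InnerProductSpace ℂ G]

/-- The bounded operators of finite rank, encoded as the span of the rank-one operators. -/
def finiteRank (E F : Type*) [NormedAddCommGroup E] [InnerProductSpace ℂ E]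
    [NormedAddCommGroup F] [InnerProductSpace ℂ F] : Submodule ℂ (E →L[ℂ] F) :=
  Submodule.span ℂ (range fun p : F × E => rankOne ℂ p.1 p.2)

lemma rankOne_mem_finiteRank (x : F) (y : E) : rankOne ℂ x y ∈ finiteRank E F :=
  Submodule.subset_span ⟨(x, y), rfl⟩

lemma comp_mem_finiteRank_left (S : F →L[ℂ] G) {T : E →L[ℂ] F} (hT : T ∈ finiteRank E F) :
    S ∘L T ∈ finiteRank E G := by
  induction hT using Submodule.span_induction with
  | mem T h =>
    obtain ⟨p, rfl⟩ := h
    rw [comp_rankOne]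
    exact rankOne_mem_finiteRank _ _
  | zero => simp
  | add A B _ _ hA hB => rw [comp_add]; exact add_mem hA hB
  | smul c A _ hA => rw [comp_smul]; exact Submodule.smul_mem _ _ hA

lemma adjoint_mem_finiteRank [CompleteSpace E] [CompleteSpace F] {T : E →L[ℂ] F}
    (hT : T ∈ finiteRank E F) : adjoint T ∈ finiteRank F E := by
  induction hT using Submodule.span_induction with
  | mem T h =>
    obtain ⟨p, rfl⟩ := h
    rw [adjoint_rankOne]
    exact rankOne_mem_finiteRank _ _
  | zero => simp
  | add A B _ _ hA hB => rw [map_add]; exact add_mem hA hB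
  | smul c A _ hA => rw [map_smulₛₗ]; exact Submodule.smul_mem _ _ hA

lemma comp_mem_finiteRank_right [CompleteSpace E] [CompleteSpace G] {T : E →L[ℂ] F}
    (hT : T ∈ finiteRank E F) (S : G →L[ℂ] E) : T ∘L S ∈ finiteRank G F := by
  induction hT using Submodule.span_induction with
  | mem T h =>
    obtain ⟨p, rfl⟩ := h
    rw [rankOne_comp]
    exact rankOne_mem_finiteRank _ _
  | zero => simp
  | add A B _ _ hA hB => rw [add_comp]; exact add_mem hA hB
  | smul c A _ hA => rw [smul_comp]; exact Submodule.smul_mem _ _ hA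

lemma mul_mem_finiteRank_left (S : E →L[ℂ] E) {T : E →L[ℂ] E} (hT : T ∈ finiteRank E E) :
    S * T ∈ finiteRank E E :=
  comp_mem_finiteRank_left S hT

lemma mul_mem_finiteRank_right [CompleteSpace E] {T : E →L[ℂ] E} (hT : T ∈ finiteRank E E)
    (S : E →L[ℂ] E) : T * S ∈ finiteRank E E :=
  comp_mem_finiteRank_right hT S

lemma exists_finite_norm_comp_le {T : E →L[ℂ] F} (hT : T ∈ finiteRank E F) :
    ∃ s : Set F, s.Finite ∧ ∃ C : ℝ, 0 ≤ C ∧ ∀ (S : F →L[ℂ] F) (ε : ℝ), 0 ≤ ε →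
      (∀ x ∈ s, ‖S x‖ ≤ ε) → ‖S ∘L T‖ ≤ C * ε := by
  induction hT using Submodule.span_induction with
  | mem T h =>
    obtain ⟨⟨x, y⟩, rfl⟩ := h
    refine ⟨{x}, finite_singleton x, ‖y‖, norm_nonneg _, fun S ε _ hS => ?_⟩
    rw [comp_rankOne, norm_rankOne, mul_comm]
    exact mul_le_mul_of_nonneg_left (hS x rfl) (norm_nonneg y)
  | zero => exact ⟨∅, finite_empty, 0, le_rfl, fun S ε _ _ => by simp⟩
  | add A B _ _ hA hB =>
    obtain ⟨s, hs, C, hC, hsC⟩ := hA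
    obtain ⟨s', hs', C', hC', hsC'⟩ := hB
    refine ⟨s ∪ s', hs.union hs', C + C', add_nonneg hC hC', fun S ε hε hS => ?_⟩
    rw [comp_add, add_mul]
    exact (norm_add_le _ _).trans <| add_le_add (hsC S ε hε fun x hx => hS x (Or.inl hx))
      (hsC' S ε hε fun x hx => hS x (Or.inr hx))
  | smul c A _ hA =>
    obtain ⟨s, hs, C, hC, hsC⟩ := hA
    refine ⟨s, hs, ‖c‖ * C, mul_nonneg (norm_nonneg _) hC, fun S ε hε hS => ?_⟩
    rw [comp_smul, norm_smul, mul_assoc]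
    exact mul_le_mul_of_nonneg_left (hsC S ε hε hS) (norm_nonneg _)

lemma isCompactOperator_of_mem_finiteRank {T : E →L[ℂ] F} (hT : T ∈ finiteRank E F) :
    IsCompactOperator T := by
  induction hT using Submodule.span_induction with
  | mem T h =>
    obtain ⟨⟨x, y⟩, rfl⟩ := h
    have h_inner := isCompactOperator_of_locallyCompactSpace_dom (innerSL ℂ y)
    exact h_inner.clm_comp (toSpanSingleton ℂ x)
  | zero => exact isCompactOperator_zero
  | add A B _ _ hA hB => exact hA.add hB
  | smul c A _ hA => exact hA.smul c

lemma finiteDimensional_range_of_mem_finiteRank {T : E →L[ℂ] F} (hT : T ∈ finiteRank E F) :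
    FiniteDimensional ℂ T.range := by
  induction hT using Submodule.span_induction with
  | mem T h =>
    obtain ⟨⟨x, y⟩, rfl⟩ := h
    refine Submodule.finiteDimensional_of_le (S₂ := ℂ ∙ x) ?_
    rintro _ ⟨z, rfl⟩
    exact Submodule.smul_mem _ _ (Submodule.mem_span_singleton_self x)
  | zero =>
    refine Submodule.finiteDimensional_of_le (S₂ := ⊥) ?_
    rintro _ ⟨z, rfl⟩
    rfl
  | add A B _ _ hA hB =>
    refine Submodule.finiteDimensional_of_le (S₂ := A.range ⊔ B.range) ?_
    rintro _ ⟨z, rfl⟩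
    exact Submodule.add_mem_sup ⟨z, rfl⟩ ⟨z, rfl⟩
  | smul c A _ hA =>
    refine Submodule.finiteDimensional_of_le (S₂ := A.range) ?_
    rintro _ ⟨z, rfl⟩
    exact Submodule.smul_mem _ c ⟨z, rfl⟩

lemma norm_sum_rankOne_le_one {ι : Type*} [Fintype ι] {v : ι → F} {w : ι → E}
    (hv : Orthonormal ℂ v) (hw : Orthonormal ℂ w) : ‖∑ i, rankOne ℂ (v i) (w i)‖ ≤ 1 := by
  refine opNorm_le_bound _ zero_le_one fun x => ?_
  have h_norm : ‖∑ i, inner ℂ (w i) x • v i‖ ^ 2 = ∑ i, ‖inner ℂ (w i) x‖ ^ 2 := by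
    rw [← Complex.ofReal_inj, Complex.ofReal_pow]
    refine (inner_self_eq_norm_sq_to_K (𝕜 := ℂ) (_ : F)).symm.trans ?_
    rw [hv.inner_sum]
    push_cast
    exact Finset.sum_congr rfl fun i _ => RCLike.conj_mul _
  have h_apply : (∑ i, rankOne ℂ (v i) (w i)) x = ∑ i, inner ℂ (w i) x • v i := by
    simp [sum_apply]
  rw [one_mul, h_apply]
  refine le_of_sq_le_sq ?_ (norm_nonneg _)
  rw [h_norm]
  exact hw.sum_inner_products_le x

end FiniteRank

section ParamNest

open InnerProductSpace ContinuousLinearMap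

/-- A continuous nest parametrised by the whole real line: constant outside `[0, 1]`, and with
ranges that are only required to increase weakly, so that nests can be reparametrised. -/
structure ParamNest (E : Type*) [NormedAddCommGroup E] [InnerProductSpace ℂ E] where
  proj : ℝ → E →L[ℂ] E
  inner_proj_left : ∀ t x y, inner ℂ (proj t x) y = inner ℂ x (proj t y)
  proj_proj_of_ge : ∀ s t, s ≤ t → ∀ x, proj t (proj s x) = proj s x
  proj_of_nonpos : ∀ t ≤ 0, proj t = 0
  proj_of_one_le : ∀ t, 1 ≤ t → proj t = 1
  continuous_proj_apply : ∀ x, Continuous fun t => proj t x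

variable {E F G : Type*} [NormedAddCommGroup E] [InnerProductSpace ℂ E]
  [NormedAddCommGroup F] [InnerProductSpace ℂ F] [NormedAddCommGroup G] [InnerProductSpace ℂ G]

namespace ParamNest

instance : CoeFun (ParamNest E) fun _ => ℝ → E →L[ℂ] E := ⟨proj⟩

variable {P : ParamNest E} {Q : ParamNest F} {R : ParamNest G}

lemma proj_proj_of_le {s t : ℝ} (hst : s ≤ t) (x : E) : P s (P t x) = P s x := by
  refine ext_inner_right ℂ fun y => ?_
  rw [P.inner_proj_left, P.inner_proj_left, P.inner_proj_left, P.proj_proj_of_ge s t hst]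

lemma proj_proj (t : ℝ) (x : E) : P t (P t x) = P t x :=
  proj_proj_of_le le_rfl x

/-- The operators that map the range of `P t` into the range of `Q (t - δ)` for all `t`. The shift
`δ` may be negative. -/
def lowering (P : ParamNest E) (Q : ParamNest F) (δ : ℝ) : Submodule ℂ (E →L[ℂ] F) where
  carrier := {A | ∀ t x, Q (t - δ) (A (P t x)) = A (P t x)}
  add_mem' hA hB t x := by simp only [add_apply, map_add, hA t x, hB t x]
  zero_mem' t x := by simp only [zero_apply, map_zero]
  smul_mem' c A hA t x := by simp only [smul_apply, map_smul, hA t x]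

lemma proj_apply_of_mem_lowering {δ : ℝ} {A : E →L[ℂ] F} (hA : A ∈ lowering P Q δ) {s t : ℝ}
    (hst : t - δ ≤ s) (x : E) : Q s (A (P t x)) = A (P t x) := by
  rw [← hA t x, Q.proj_proj_of_ge _ _ hst]

lemma lowering_anti {δ δ' : ℝ} (h : δ ≤ δ') : lowering P Q δ' ≤ lowering P Q δ :=
  fun _ hA _ x => proj_apply_of_mem_lowering hA (by linarith) x

lemma comp_mem_lowering {δ δ' : ℝ} {A : E →L[ℂ] F} {B : F →L[ℂ] G} (hB : B ∈ lowering Q R δ')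
    (hA : A ∈ lowering P Q δ) : B ∘L A ∈ lowering P R (δ + δ') := fun t x => by
  rw [comp_apply, ← hA t x]
  exact proj_apply_of_mem_lowering hB (by linarith) _

lemma isClosed_lowering (P : ParamNest E) (Q : ParamNest F) (δ : ℝ) :
    IsClosed (lowering P Q δ : Set (E →L[ℂ] F)) := by
  have h_inter : (lowering P Q δ : Set (E →L[ℂ] F)) =
      ⋂ (t : ℝ) (x : E), {A | Q (t - δ) (A (P t x)) = A (P t x)} := by
    ext A
    simp only [mem_iInter]
    rfl
  rw [h_inter]
  exact isClosed_iInter fun t => isClosed_iInter fun x => isClosed_eq (by fun_prop) (by fun_prop)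

/-- The operators mapping the range of `P t` into the range of `Q t` for all `t`; for `P = Q` this
is the nest algebra. -/
abbrev triangular (P : ParamNest E) (Q : ParamNest F) : Submodule ℂ (E →L[ℂ] F) :=
  lowering P Q 0

lemma mem_triangular_iff {A : E →L[ℂ] F} :
    A ∈ triangular P Q ↔ ∀ t x, Q t (A (P t x)) = A (P t x) :=
  forall₂_congr fun t x => by rw [sub_zero]

lemma comp_mem_triangular {A : E →L[ℂ] F} {B : F →L[ℂ] G} (hB : B ∈ triangular Q R)
    (hA : A ∈ triangular P Q) : B ∘L A ∈ triangular P R := by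
  simpa only [add_zero] using comp_mem_lowering hB hA

lemma one_mem_triangular : 1 ∈ triangular P P :=
  mem_triangular_iff.2 fun t x => by simp only [one_apply_eq_self, proj_proj]

lemma mul_mem_triangular {A B : E →L[ℂ] E} (hA : A ∈ triangular P P) (hB : B ∈ triangular P P) :
    A * B ∈ triangular P P :=
  comp_mem_triangular hA hB

lemma pow_mem_lowering {δ : ℝ} {T : E →L[ℂ] E} (hT : T ∈ lowering P P δ) (n : ℕ) :
    T ^ n ∈ lowering P P (n * δ) := by
  induction n with
  | zero => simpa using one_mem_triangular
  | succ n ih =>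
    have h_eq : ((n + 1 : ℕ) : ℝ) * δ = δ + n * δ := by push_cast; ring
    rw [pow_succ, h_eq]
    exact comp_mem_lowering ih hT

lemma eq_zero_of_mem_lowering {δ : ℝ} (hδ : 1 ≤ δ) {A : E →L[ℂ] F} (hA : A ∈ lowering P Q δ) :
    A = 0 := by
  ext x
  have h := proj_apply_of_mem_lowering hA (s := 0) (t := 1) (by linarith) x
  rw [Q.proj_of_nonpos 0 le_rfl, P.proj_of_one_le 1 le_rfl] at h
  exact h.symm

lemma isNilpotent_of_mem_lowering {δ : ℝ} (hδ : 0 < δ) {T : E →L[ℂ] E}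
    (hT : T ∈ lowering P P δ) : IsNilpotent T := by
  obtain ⟨n, hn⟩ := exists_nat_gt (1 / δ)
  rw [div_lt_iff₀ hδ] at hn
  exact ⟨n, eq_zero_of_mem_lowering hn.le (pow_mem_lowering hT n)⟩

lemma rankOne_mem_lowering {s t : ℝ} {x : F} {y : E} (hx : Q s x = x) (hy : P t y = 0) :
    rankOne ℂ x y ∈ lowering P Q (t - s) := fun r z => by
  rw [rankOne_apply, map_smul]
  rcases le_total r t with hrt | htr
  · have h_inner : inner ℂ y (P r z) = 0 := by
      rw [← P.inner_proj_left, ← proj_proj_of_le hrt y, hy, map_zero, inner_zero_left]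
    rw [h_inner, zero_smul, zero_smul]
  · rw [← hx, Q.proj_proj_of_ge s _ (by linarith)]

/-- The finite-rank operators that lower the nest by some positive amount. -/
def strictTriangular (P : ParamNest E) : Submodule ℂ (E →L[ℂ] E) where
  carrier := {T | T ∈ finiteRank E E ∧ ∃ δ > 0, T ∈ lowering P P δ}
  add_mem' := by
    rintro S T ⟨hS, δ, hδ, hSδ⟩ ⟨hT, δ', hδ', hTδ'⟩
    exact ⟨add_mem hS hT, min δ δ', lt_min hδ hδ',
      add_mem (lowering_anti (min_le_left _ _) hSδ) (lowering_anti (min_le_right _ _) hTδ')⟩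
  zero_mem' := ⟨zero_mem _, 1, one_pos, zero_mem _⟩
  smul_mem' := by
    rintro c T ⟨hT, δ, hδ, hTδ⟩
    exact ⟨Submodule.smul_mem _ c hT, δ, hδ, Submodule.smul_mem _ c hTδ⟩

lemma strictTriangular_le_finiteRank : P.strictTriangular ≤ finiteRank E E :=
  fun _ hT => hT.1

lemma strictTriangular_le_triangular : P.strictTriangular ≤ triangular P P := by
  rintro T ⟨-, δ, hδ, hT⟩
  exact lowering_anti hδ.le hT

lemma isNilpotent_of_mem_strictTriangular {T : E →L[ℂ] E} (hT : T ∈ P.strictTriangular) :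
    IsNilpotent T := by
  obtain ⟨-, δ, hδ, hTδ⟩ := hT
  exact isNilpotent_of_mem_lowering hδ hTδ

lemma mul_mem_strictTriangular_left {S T : E →L[ℂ] E} (hS : S ∈ triangular P P)
    (hT : T ∈ P.strictTriangular) : S * T ∈ P.strictTriangular := by
  obtain ⟨hT, δ, hδ, hTδ⟩ := hT
  exact ⟨mul_mem_finiteRank_left S hT, δ, hδ, add_zero δ ▸ comp_mem_lowering hS hTδ⟩

lemma mul_mem_strictTriangular_right [CompleteSpace E] {S T : E →L[ℂ] E}
    (hT : T ∈ P.strictTriangular) (hS : S ∈ triangular P P) : T * S ∈ P.strictTriangular := by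
  obtain ⟨hT, δ, hδ, hTδ⟩ := hT
  exact ⟨mul_mem_finiteRank_right hT S, δ, hδ, zero_add δ ▸ comp_mem_lowering hTδ hS⟩

lemma rankOne_mem_strictTriangular {s t : ℝ} (hst : s < t) {x y : E} (hx : P s x = x)
    (hy : P t y = 0) : rankOne ℂ x y ∈ P.strictTriangular :=
  ⟨rankOne_mem_finiteRank x y, t - s, sub_pos.2 hst, rankOne_mem_lowering hx hy⟩

end ParamNest

end ParamNest

section BrownianPath

open InnerProductSpace ContinuousLinearMap

variable {E : Type*} [NormedAddCommGroup E] [InnerProductSpace ℂ E]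

/-- A path on `[0, 1]` with the covariance of Brownian motion: its increments over disjoint
intervals are orthogonal, and their squared norms are the lengths of the intervals. -/
def IsBrownianPath (ψ : ℝ → E) : Prop :=
  ∀ r ∈ Icc (0 : ℝ) 1, ∀ r' ∈ Icc (0 : ℝ) 1, inner ℂ (ψ r) (ψ r') = ((min r r' : ℝ) : ℂ)

/-- The `j`-th increment of a path over the grid of mesh `1 / n`, normalised so that the increments
of a Brownian path are unit vectors. -/
noncomputable def pathIncrement (ψ : ℝ → E) (n j : ℕ) : E :=
  ((√(n : ℝ) : ℝ) : ℂ) • (ψ (((j + 1 : ℕ) : ℝ) / n) - ψ ((j : ℝ) / n))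

/-- The partial isometry shifting the grid increments of a path from index `i + b` to `i + a`. -/
noncomputable def pathShift (ψ : ℝ → E) (n a b : ℕ) : E →L[ℂ] E :=
  ∑ i ∈ Finset.range (n - 2), rankOne ℂ (pathIncrement ψ n (i + a)) (pathIncrement ψ n (i + b))

lemma star_pathShift [CompleteSpace E] (ψ : ℝ → E) (n a b : ℕ) :
    star (pathShift ψ n a b) = pathShift ψ n b a := by
  simp only [pathShift, star_sum, star_eq_adjoint, adjoint_rankOne]

lemma inv_sqrt_smul_pathIncrement (ψ : ℝ → E) {n : ℕ} (hn : 0 < n) (j : ℕ) :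
    (((√(n : ℝ))⁻¹ : ℝ) : ℂ) • pathIncrement ψ n j =
      ψ (((j + 1 : ℕ) : ℝ) / n) - ψ ((j : ℝ) / n) := by
  have : (0 : ℝ) < n := Nat.cast_pos.2 hn
  rw [pathIncrement, smul_smul, ← Complex.ofReal_mul, inv_mul_cancel₀ (by positivity),
    Complex.ofReal_one, one_smul]

lemma natCast_div_mem_Icc {m n : ℕ} (h : m ≤ n) : (m : ℝ) / n ∈ Icc (0 : ℝ) 1 :=
  ⟨by positivity, div_le_one_of_le₀ (Nat.cast_le.2 h) (Nat.cast_nonneg n)⟩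

lemma norm_apply_sub_self_le {S : E →L[ℂ] E} (hS : ‖S‖ ≤ 1) (x y : E) :
    ‖S x - x‖ ≤ ‖S y - y‖ + 2 * ‖x - y‖ := by
  have h_split : S x - x = S y - y + (S (x - y) - (x - y)) := by rw [map_sub]; abel
  have hSxy : ‖S (x - y)‖ ≤ ‖x - y‖ := by simpa using S.le_of_opNorm_le hS (x - y)
  rw [h_split]
  linarith [norm_add_le (S y - y) (S (x - y) - (x - y)), norm_sub_le (S (x - y)) (x - y)]

namespace IsBrownianPath

variable {ψ : ℝ → E} (hψ : IsBrownianPath ψ)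

include hψ

lemma apply_zero : ψ 0 = 0 := by
  simpa using hψ 0 (by simp) 0 (by simp)

lemma norm_sub_sq {r r' : ℝ} (hr : r ∈ Icc (0 : ℝ) 1) (hr' : r' ∈ Icc (0 : ℝ) 1) :
    ‖ψ r - ψ r'‖ ^ 2 = |r - r'| := by
  rw [← Complex.ofReal_inj, Complex.ofReal_pow]
  refine (inner_self_eq_norm_sq_to_K (𝕜 := ℂ) (ψ r - ψ r')).symm.trans ?_
  rw [inner_sub_left, inner_sub_right, inner_sub_right, hψ _ hr _ hr, hψ _ hr _ hr',
    hψ _ hr' _ hr, hψ _ hr' _ hr']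
  rcases le_total r r' with h | h
  · rw [abs_of_nonpos (by linarith)]; simp [h]
  · rw [abs_of_nonneg (by linarith)]; simp [h]

lemma norm_sub_le_sqrt {r r' d : ℝ} (hr : r ∈ Icc (0 : ℝ) 1) (hr' : r' ∈ Icc (0 : ℝ) 1)
    (hd : |r - r'| ≤ d) : ‖ψ r - ψ r'‖ ≤ √d :=
  Real.le_sqrt_of_sq_le ((hψ.norm_sub_sq hr hr').trans_le hd)

lemma inner_pathIncrement_apply {n j m : ℕ} (hj : j < n) (hm : m ≤ n) :
    inner ℂ (pathIncrement ψ n j) (ψ ((m : ℝ) / n)) =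
      if j < m then (((√(n : ℝ))⁻¹ : ℝ) : ℂ) else 0 := by
  have hn : (0 : ℝ) < n := Nat.cast_pos.2 (by lia)
  rw [pathIncrement, inner_smul_left, inner_sub_left,
    hψ _ (natCast_div_mem_Icc hj) _ (natCast_div_mem_Icc hm),
    hψ _ (natCast_div_mem_Icc hj.le) _ (natCast_div_mem_Icc hm)]
  split_ifs with hjm
  · rw [min_eq_left (by gcongr; exact hjm), min_eq_left (by gcongr), Complex.conj_ofReal,
      ← Complex.ofReal_sub, ← Complex.ofReal_mul]
    congr 1
    push_cast
    field_simp
    rw [Real.sq_sqrt hn.le]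
    ring
  · rw [min_eq_right (by gcongr; lia), min_eq_right (by gcongr; lia), sub_self, mul_zero]

lemma inner_pathIncrement {n j k : ℕ} (hj : j < n) (hk : k < n) :
    inner ℂ (pathIncrement ψ n j) (pathIncrement ψ n k) = if j = k then 1 else 0 := by
  have hn : (0 : ℝ) < n := Nat.cast_pos.2 (by lia)
  have h_sqrt : ((√(n : ℝ) : ℝ) : ℂ) ≠ 0 := Complex.ofReal_ne_zero.2 (by positivity)
  conv_lhs => rw [pathIncrement.eq_def ψ n k]
  rw [inner_smul_right, inner_sub_right, hψ.inner_pathIncrement_apply hj hk,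
    hψ.inner_pathIncrement_apply hj hk.le]
  rcases lt_trichotomy j k with h | h | h
  · simp [h, h.ne, Nat.lt_succ_of_lt h]
  · simp [h, h_sqrt]
  · simp [h.not_gt, h.ne', Nat.lt_succ_iff.not.2 h.not_ge]

lemma orthonormal_pathIncrement {n d : ℕ} (hd : d ≤ 2) :
    Orthonormal ℂ fun i : Fin (n - 2) => pathIncrement ψ n (i + d) := by
  rw [orthonormal_iff_ite]
  intro i j
  rw [hψ.inner_pathIncrement (by lia) (by lia)]
  simp [Fin.ext_iff]

lemma norm_pathShift_le_one (n : ℕ) {a b : ℕ} (ha : a ≤ 2) (hb : b ≤ 2) :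
    ‖pathShift ψ n a b‖ ≤ 1 := by
  rw [pathShift, Finset.sum_range]
  exact norm_sum_rankOne_le_one (hψ.orthonormal_pathIncrement ha) (hψ.orthonormal_pathIncrement hb)

lemma pathShift_apply_grid {n m b : ℕ} (a : ℕ) (hn : 0 < n) (hb : b ≤ 2) (hm : m ≤ n) :
    pathShift ψ n a b (ψ ((m : ℝ) / n)) =
      ψ (((min (n - 2) (m - b) + a : ℕ) : ℝ) / n) - ψ ((a : ℝ) / n) := by
  have h_term : ∀ i ∈ Finset.range (n - 2),
      rankOne ℂ (pathIncrement ψ n (i + a)) (pathIncrement ψ n (i + b)) (ψ ((m : ℝ) / n)) =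
        if i < m - b then ψ (((i + a + 1 : ℕ) : ℝ) / n) - ψ (((i + a : ℕ) : ℝ) / n) else 0 := by
    intro i hi
    rw [Finset.mem_range] at hi
    rw [rankOne_apply, hψ.inner_pathIncrement_apply (by lia) hm, ite_smul, zero_smul,
      inv_sqrt_smul_pathIncrement ψ hn]
    exact if_congr (by lia) rfl rfl
  have h_filter : (Finset.range (n - 2)).filter (· < m - b) =
      Finset.range (min (n - 2) (m - b)) := by
    ext i; simp
  have h_telescope := Finset.sum_range_sub (fun i : ℕ => ψ (((i + a : ℕ) : ℝ) / n))
    (min (n - 2) (m - b))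
  rw [pathShift, sum_apply, Finset.sum_congr rfl h_term, ← Finset.sum_filter, h_filter]
  simpa only [add_right_comm, zero_add] using h_telescope

lemma norm_pathShift_apply_grid_sub_le {n m a b : ℕ} (hn : 2 ≤ n) (ha : a ≤ 2) (hb : b ≤ 2)
    (hm : m ≤ n) :
    ‖pathShift ψ n a b (ψ ((m : ℝ) / n)) - ψ ((m : ℝ) / n)‖ ≤ 2 * √(2 / n) := by
  have h_dist : ∀ {k l : ℕ}, k ≤ n → l ≤ n → k ≤ l + 2 → l ≤ k + 2 →
      ‖ψ ((k : ℝ) / n) - ψ ((l : ℝ) / n)‖ ≤ √(2 / n) := by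
    intro k l hk hl hkl hlk
    refine hψ.norm_sub_le_sqrt (natCast_div_mem_Icc hk) (natCast_div_mem_Icc hl) ?_
    rw [← sub_div, abs_div, Nat.abs_cast]
    gcongr
    have hkl' : (k : ℝ) ≤ l + 2 := by exact_mod_cast hkl
    have hlk' : (l : ℝ) ≤ k + 2 := by exact_mod_cast hlk
    exact abs_le.2 ⟨by linarith, by linarith⟩
  have h_main := h_dist (show min (n - 2) (m - b) + a ≤ n by lia) hm (by lia) (by lia)
  have h_start := h_dist (show a ≤ n by lia) (Nat.zero_le n) (by lia) (by lia)
  rw [Nat.cast_zero, zero_div, hψ.apply_zero, sub_zero] at h_start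
  rw [hψ.pathShift_apply_grid a (by lia) hb hm, sub_right_comm]
  linarith [norm_sub_le (ψ (((min (n - 2) (m - b) + a : ℕ) : ℝ) / n) - ψ ((m : ℝ) / n))
    (ψ ((a : ℝ) / n))]

lemma norm_pathShift_apply_sub_le {n a b : ℕ} (hn : 2 ≤ n) (ha : a ≤ 2) (hb : b ≤ 2) {r : ℝ}
    (hr : r ∈ Icc (0 : ℝ) 1) : ‖pathShift ψ n a b (ψ r) - ψ r‖ ≤ 4 * √(2 / n) := by
  have hn' : (0 : ℝ) < n := Nat.cast_pos.2 (by lia)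
  have h_floor_le : (⌊r * n⌋₊ : ℝ) ≤ r * n := Nat.floor_le (mul_nonneg hr.1 hn'.le)
  have hm : ⌊r * n⌋₊ ≤ n := by
    have : (⌊r * n⌋₊ : ℝ) ≤ n := h_floor_le.trans (mul_le_of_le_one_left hn'.le hr.2)
    exact_mod_cast this
  have h_near : ‖ψ r - ψ ((⌊r * n⌋₊ : ℝ) / n)‖ ≤ √(2 / n) := by
    refine hψ.norm_sub_le_sqrt hr (natCast_div_mem_Icc hm) ?_
    rw [show r - ⌊r * n⌋₊ / n = (r * n - ⌊r * n⌋₊) / n by field_simp, abs_div, Nat.abs_cast]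
    gcongr
    exact abs_le.2 ⟨by linarith, by linarith [Nat.lt_floor_add_one (r * n)]⟩
  linarith [norm_apply_sub_self_le (hψ.norm_pathShift_le_one n ha hb) (ψ r)
    (ψ ((⌊r * n⌋₊ : ℝ) / n)), hψ.norm_pathShift_apply_grid_sub_le hn ha hb hm]

lemma tendsto_pathShift_apply {a b : ℕ} (ha : a ≤ 2) (hb : b ≤ 2) {r : ℝ}
    (hr : r ∈ Icc (0 : ℝ) 1) : Tendsto (fun n => pathShift ψ n a b (ψ r)) atTop (𝓝 (ψ r)) := by
  have h_bound : Tendsto (fun n : ℕ => 4 * √(2 / (n : ℝ))) atTop (𝓝 0) := by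
    simpa using ((tendsto_const_div_atTop_nhds_zero_nat 2).sqrt).const_mul 4
  rw [tendsto_iff_norm_sub_tendsto_zero]
  refine squeeze_zero' (Eventually.of_forall fun n => norm_nonneg _) ?_ h_bound
  filter_upwards [eventually_ge_atTop 2] with n hn
  exact hψ.norm_pathShift_apply_sub_le hn ha hb hr

lemma tendsto_sub_star_pathShift_mul [CompleteSpace E] (l : ℕ) :
    Tendsto (fun n => (pathShift ψ n 0 2 - star (pathShift ψ n 0 2)) *
      (pathShift ψ l 0 2 - star (pathShift ψ l 0 2))) atTop (𝓝 0) := by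
  simp only [star_pathShift]
  have h_path {r : ℝ} (hr : r ∈ Icc (0 : ℝ) 1) :
      Tendsto (fun n => (pathShift ψ n 0 2 - pathShift ψ n 2 0) (ψ r)) atTop (𝓝 0) := by
    simpa using (hψ.tendsto_pathShift_apply (by simp) le_rfl hr).sub
      (hψ.tendsto_pathShift_apply le_rfl (by simp) hr)
  have h_increment {j : ℕ} (hj : j < l) : Tendsto
      (fun n => (pathShift ψ n 0 2 - pathShift ψ n 2 0) (pathIncrement ψ l j)) atTop (𝓝 0) := by
    simpa only [pathIncrement, map_smul, map_sub, sub_zero, smul_zero] using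
      ((h_path (natCast_div_mem_Icc hj)).sub (h_path (natCast_div_mem_Icc hj.le))).const_smul
        ((√(l : ℝ) : ℝ) : ℂ)
  have h_shift {a : ℕ} (b : ℕ) (ha : a ≤ 2) : Tendsto
      (fun n => (pathShift ψ n 0 2 - pathShift ψ n 2 0) * pathShift ψ l a b) atTop (𝓝 0) := by
    have h_term : ∀ i ∈ Finset.range (l - 2), Tendsto (fun n =>
        (pathShift ψ n 0 2 - pathShift ψ n 2 0) *
          rankOne ℂ (pathIncrement ψ l (i + a)) (pathIncrement ψ l (i + b))) atTop (𝓝 0) := by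
      intro i hi
      rw [Finset.mem_range] at hi
      rw [tendsto_zero_iff_norm_tendsto_zero]
      simp only [mul_def, comp_rankOne, norm_rankOne]
      simpa only [norm_zero, zero_mul] using
        (h_increment (show i + a < l by lia)).norm.mul_const ‖pathIncrement ψ l (i + b)‖
    simpa only [pathShift.eq_def ψ l, Finset.mul_sum, Finset.sum_const_zero] using
      tendsto_finsetSum _ h_term
  simpa only [mul_sub, sub_zero] using (h_shift 2 (by simp)).sub (h_shift 0 le_rfl)

end IsBrownianPath

end BrownianPath

namespace ParamNest

open InnerProductSpace ContinuousLinearMap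

variable {E : Type*} [NormedAddCommGroup E] [InnerProductSpace ℂ E] {P : ParamNest E}

lemma inner_proj_self (t : ℝ) (x : E) : inner ℂ (P t x) x = ((‖P t x‖ ^ 2 : ℝ) : ℂ) := by
  rw [← proj_proj t x, P.inner_proj_left, inner_self_eq_norm_sq_to_K, proj_proj]
  simp

lemma inner_proj_proj_of_le {s t : ℝ} (hst : s ≤ t) (x : E) :
    inner ℂ (P s x) (P t x) = ((‖P s x‖ ^ 2 : ℝ) : ℂ) := by
  rw [← P.inner_proj_left, P.proj_proj_of_ge s t hst, inner_proj_self]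

lemma norm_proj_le (t : ℝ) (x : E) : ‖P t x‖ ≤ ‖x‖ := by
  have h := norm_inner_le_norm (𝕜 := ℂ) (P t x) x
  rw [inner_proj_self, Complex.norm_real, norm_pow, norm_norm, sq] at h
  by_contra! hlt
  exact h.not_gt (mul_lt_mul_of_pos_left hlt ((norm_nonneg x).trans_lt hlt))

lemma monotone_norm_proj (x : E) : Monotone fun t => ‖P t x‖ := fun s t hst => by
  simpa only [proj_proj_of_le hst] using norm_proj_le (P := P) s (P t x)

lemma exists_isBrownianPath (P : ParamNest E) {x : E} (hx : ‖x‖ = 1) : ∃ τ : ℝ → ℝ,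
    IsBrownianPath (fun r => P (τ r) x) ∧ StrictMonoOn τ (Icc 0 1) ∧ P (τ 1) x = x := by
  have h_cont : Continuous fun t => ‖P t x‖ ^ 2 := (P.continuous_proj_apply x).norm.pow 2
  have h_value : ∀ r ∈ Icc (0 : ℝ) 1, ∃ t, ‖P t x‖ ^ 2 = r := by
    intro r hr
    have h_ivt := intermediate_value_Icc (zero_le_one (α := ℝ)) h_cont.continuousOn
    rw [P.proj_of_nonpos 0 le_rfl, P.proj_of_one_le 1 le_rfl] at h_ivt
    obtain ⟨t, -, ht⟩ := h_ivt (show r ∈ _ by simpa [hx] using hr)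
    exact ⟨t, ht⟩
  choose! τ hτ using h_value
  have hτ_mono : StrictMonoOn τ (Icc 0 1) := by
    intro r hr r' hr' hrr'
    by_contra! h
    have h_sq := pow_le_pow_left₀ (norm_nonneg _) (monotone_norm_proj (P := P) x h) 2
    rw [hτ r hr, hτ r' hr'] at h_sq
    exact h_sq.not_gt hrr'
  have h_inner : ∀ r ∈ Icc (0 : ℝ) 1, ∀ r' ∈ Icc (0 : ℝ) 1, r ≤ r' →
      inner ℂ (P (τ r) x) (P (τ r') x) = (r : ℂ) := by
    intro r hr r' hr' hrr'
    rw [inner_proj_proj_of_le (hτ_mono.monotoneOn hr hr' hrr'), hτ r hr]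
  have h_one : (1 : ℝ) ∈ Icc (0 : ℝ) 1 := right_mem_Icc.2 zero_le_one
  refine ⟨τ, fun r hr r' hr' => ?_, hτ_mono, ?_⟩
  · rcases le_total r r' with h | h
    · rw [h_inner r hr r' hr' h, min_eq_left h]
    · rw [← inner_conj_symm, h_inner r' hr' r hr h, min_eq_right h, Complex.conj_ofReal]
  · have h_norm : ‖P (τ 1) x‖ = 1 :=
      (pow_eq_one_iff_of_nonneg (norm_nonneg _) two_ne_zero).1 (hτ 1 h_one)
    rw [← inner_eq_one_iff_of_norm_eq_one (𝕜 := ℂ) h_norm hx, inner_proj_self, hτ 1 h_one,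
      Complex.ofReal_one]

lemma pathShift_mem_strictTriangular {x : E} {τ : ℝ → ℝ} (hτ : StrictMonoOn τ (Icc 0 1)) (n : ℕ) :
    pathShift (fun r => P (τ r) x) n 0 2 ∈ P.strictTriangular := by
  refine Submodule.sum_mem _ fun i hi => ?_
  rw [Finset.mem_range] at hi
  have hn : (0 : ℝ) < n := Nat.cast_pos.2 (by lia)
  have h_lt {k : ℕ} (hk : k + 1 ≤ n) : τ ((k : ℝ) / n) < τ (((k + 1 : ℕ) : ℝ) / n) :=
    hτ (natCast_div_mem_Icc (by lia)) (natCast_div_mem_Icc hk) (by gcongr; lia)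
  refine rankOne_mem_strictTriangular (h_lt (k := i + 1) (by lia)) ?_ ?_
  · simp only [pathIncrement, map_smul, map_sub, add_zero, proj_proj]
    rw [P.proj_proj_of_ge _ _ (h_lt (by lia)).le]
  · simp only [pathIncrement, map_smul, map_sub]
    rw [proj_proj_of_le (h_lt (by lia)).le, proj_proj, sub_self, smul_zero]

lemma exists_seq_strictTriangular [CompleteSpace E] (P : ParamNest E) {x : E} (hx : ‖x‖ = 1) :
    ∃ R : ℕ → E →L[ℂ] E, (∀ n, R n ∈ P.strictTriangular) ∧ (∀ n, ‖R n‖ ≤ 1) ∧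
      Tendsto (fun n => R n x) atTop (𝓝 x) ∧
      ∀ l, Tendsto (fun n => (R n - star (R n)) * (R l - star (R l))) atTop (𝓝 0) := by
  obtain ⟨τ, hψ, hτ, hτx⟩ := P.exists_isBrownianPath hx
  refine ⟨fun n => pathShift (fun r => P (τ r) x) n 0 2, pathShift_mem_strictTriangular hτ,
    fun n => hψ.norm_pathShift_le_one n (by simp) le_rfl, ?_, hψ.tendsto_sub_star_pathShift_mul⟩
  simpa only [hτx] using
    hψ.tendsto_pathShift_apply (by simp) le_rfl (right_mem_Icc.2 (zero_le_one (α := ℝ)))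

end ParamNest

section Averaging

open ContinuousLinearMap

lemma norm_inv_smul_sum_range_le {V : Type*} [SeminormedAddCommGroup V] [NormedSpace ℂ V]
    {v : ℕ → V} {C : ℝ} (hC : ∀ i, ‖v i‖ ≤ C) (n : ℕ) :
    ‖(n : ℂ)⁻¹ • ∑ i ∈ Finset.range n, v i‖ ≤ C := by
  have h_sum : ‖∑ i ∈ Finset.range n, v i‖ ≤ n * C := by
    simpa using norm_sum_le_of_le (Finset.range n) fun i _ => hC i
  rw [norm_smul, norm_inv, Complex.norm_natCast]
  exact inv_mul_le_of_le_mul₀ n.cast_nonneg ((norm_nonneg _).trans (hC 0)) h_sum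

lemma norm_sum_sq_le_of_star_eq_neg {A ι : Type*} [NonUnitalNormedRing A] [StarRing A]
    [CStarRing A] {D : ι → A} (hD : ∀ i, star (D i) = -D i) {C η : ℝ} (hη : 0 ≤ η)
    (hC : ∀ i, ‖D i‖ ≤ C) (h_mul : ∀ i j, i ≠ j → ‖D i * D j‖ ≤ η) (s : Finset ι) :
    ‖∑ i ∈ s, D i‖ ^ 2 ≤ s.card * (C ^ 2 + s.card * η) := by
  classical
  have h_entry (i j : ι) : ‖D i * D j‖ ≤ (if i = j then C ^ 2 else 0) + η := by
    split_ifs with hij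
    · subst hij
      have h_sq : ‖D i * D i‖ ≤ C ^ 2 :=
        (norm_mul_le _ _).trans <| (sq ‖D i‖).symm.trans_le <|
          pow_le_pow_left₀ (norm_nonneg _) (hC i) 2
      linarith
    · simpa using h_mul i j hij
  have h_row : ∀ i ∈ s, ‖∑ j ∈ s, D i * D j‖ ≤ C ^ 2 + s.card * η := fun i hi => by
    refine (norm_sum_le_of_le s fun j _ => h_entry i j).trans_eq ?_
    rw [Finset.sum_add_distrib, Finset.sum_ite_eq, if_pos hi, Finset.sum_const, nsmul_eq_mul]
  have h_star : star (∑ i ∈ s, D i) = -∑ i ∈ s, D i := by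
    rw [star_sum, ← Finset.sum_neg_distrib]
    exact Finset.sum_congr rfl fun i _ => hD i
  calc ‖∑ i ∈ s, D i‖ ^ 2 = ‖∑ i ∈ s, ∑ j ∈ s, D i * D j‖ := by
        rw [sq, ← CStarRing.norm_star_mul_self, h_star, neg_mul, norm_neg, Finset.sum_mul_sum]
    _ ≤ s.card * (C ^ 2 + s.card * η) :=
        (norm_sum_le_of_le s h_row).trans_eq (by rw [Finset.sum_const, nsmul_eq_mul])

lemma norm_mul_mul_sub_star_le {A : Type*} [NonUnitalNormedRing A] [StarRing A]
    [NormedStarGroup A] {a b : A} {c d η : ℝ} (ha : ‖a‖ ≤ c) (hb : ‖b‖ ≤ d)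
    (ha' : ‖a - star a‖ ≤ η) (hb' : ‖b - star b‖ ≤ η) :
    ‖a * b * a - star (a * b * a)‖ ≤ (2 * c * d + c ^ 2) * η := by
  have : 0 ≤ c := (norm_nonneg _).trans ha
  have : 0 ≤ d := (norm_nonneg _).trans hb
  have : 0 ≤ η := (norm_nonneg _).trans ha'
  have h_norm {x y z : A} {p q r : ℝ} (hx : ‖x‖ ≤ p) (hy : ‖y‖ ≤ q) (hz : ‖z‖ ≤ r) :
      ‖x * y * z‖ ≤ p * q * r := by
    have : 0 ≤ p := (norm_nonneg _).trans hx
    have : 0 ≤ q := (norm_nonneg _).trans hy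
    exact norm_mul_le_of_le (norm_mul_le_of_le hx hy) hz
  have h_eq : a * b * a - star (a * b * a) = (a - star a) * b * a + star a * (b - star b) * a +
      star a * star b * (a - star a) := by
    rw [star_mul, star_mul]
    noncomm_ring
  rw [h_eq]
  refine (norm_add₃_le).trans ((add_le_add (add_le_add (h_norm ha' hb ha)
    (h_norm ((norm_star a).trans_le ha) hb' ha))
    (h_norm ((norm_star a).trans_le ha) ((norm_star b).trans_le hb) ha')).trans_eq ?_)
  ring

variable {E : Type*} [NormedAddCommGroup E] [InnerProductSpace ℂ E] [CompleteSpace E]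

lemma exists_subseq_norm_sub_star_mul_le {R : ℕ → E →L[ℂ] E} {x : E}
    (hRx : Tendsto (fun n => R n x) atTop (𝓝 x))
    (hR : ∀ l, Tendsto (fun n => (R n - star (R n)) * (R l - star (R l))) atTop (𝓝 0))
    {ε η : ℝ} (hε : 0 < ε) (hη : 0 < η) :
    ∃ f : ℕ → ℕ, (∀ i, ‖x - R (f i) x‖ ≤ ε) ∧ ∀ i j, i ≠ j →
      ‖(R (f i) - star (R (f i))) * (R (f j) - star (R (f j)))‖ ≤ η := by
  let almostOrthogonal : ℕ → ℕ → Prop := fun k l =>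
    ‖(R k - star (R k)) * (R l - star (R l))‖ ≤ η
  have h_symm (k l : ℕ) (h : almostOrthogonal k l) : almostOrthogonal l k := by
    have h_star : star ((R k - star (R k)) * (R l - star (R l))) =
        (R l - star (R l)) * (R k - star (R k)) := by
      simp only [star_mul, star_sub, star_star]
      noncomm_ring
    change ‖_‖ ≤ η
    rwa [← h_star, norm_star]
  have : Std.Symm almostOrthogonal := ⟨h_symm⟩
  obtain ⟨f, hfx, hf⟩ := exists_seq_of_forall_finset_exists' (fun k => ‖x - R k x‖ ≤ ε)
    almostOrthogonal fun s _ => by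
      have h_near : ∀ᶠ n in atTop, ‖x - R n x‖ ≤ ε := by
        have h_sub := (tendsto_const_nhds (x := x)).sub hRx
        rw [sub_self] at h_sub
        exact h_sub.norm.eventually_le_const (by rwa [norm_zero])
      have h_orth : ∀ᶠ n in atTop, ∀ l ∈ s, almostOrthogonal n l :=
        (Filter.eventually_all_finset s).2 fun l _ =>
          (hR l).norm.eventually_le_const (by rwa [norm_zero])
      obtain ⟨n, hn, hns⟩ := (h_near.and h_orth).exists
      exact ⟨n, hn, fun l hl => h_symm _ _ (hns l hl)⟩
  exact ⟨f, hfx, fun i j hij => hf hij⟩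

namespace ParamNest

lemma exists_strictTriangular_of_norm_eq_one (P : ParamNest E) {x : E} (hx : ‖x‖ = 1) {ε : ℝ}
    (hε : 0 < ε) :
    ∃ T ∈ P.strictTriangular, ‖T‖ ≤ 1 ∧ ‖T - star T‖ ≤ ε ∧ ‖x - T x‖ ≤ ε := by
  obtain ⟨R, hR, hR_norm, hRx, hR_mul⟩ := P.exists_seq_strictTriangular hx
  obtain ⟨f, hfx, hf⟩ := exists_subseq_norm_sub_star_mul_le hRx hR_mul hε
    (η := ε ^ 2 / 2) (by positivity)
  obtain ⟨n, hn⟩ := exists_nat_gt (8 / ε ^ 2)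
  have hn_pos : (0 : ℝ) < n := lt_trans (by positivity) hn
  have hn_ne : (n : ℂ) ≠ 0 := by exact_mod_cast hn_pos.ne'
  refine ⟨(n : ℂ)⁻¹ • ∑ i ∈ Finset.range n, R (f i),
    Submodule.smul_mem _ _ (Submodule.sum_mem _ fun i _ => hR _),
    norm_inv_smul_sum_range_le (fun i => hR_norm (f i)) n, ?_, ?_⟩
  · have h_skew := norm_sum_sq_le_of_star_eq_neg (D := fun i => R (f i) - star (R (f i)))
      (fun i => by rw [star_sub, star_star, neg_sub]) (by positivity)
      (fun i => (norm_sub_le _ _).trans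
        (add_le_add (hR_norm _) ((norm_star _).trans_le (hR_norm _))))
      hf (Finset.range n)
    have h_eq : (n : ℂ)⁻¹ • ∑ i ∈ Finset.range n, R (f i) -
        star ((n : ℂ)⁻¹ • ∑ i ∈ Finset.range n, R (f i)) =
        (n : ℂ)⁻¹ • ∑ i ∈ Finset.range n, (R (f i) - star (R (f i))) := by
      simp [star_smul, star_sum, Finset.sum_sub_distrib, smul_sub]
    rw [h_eq, norm_smul, norm_inv, Complex.norm_natCast, inv_mul_le_iff₀ hn_pos]
    refine le_of_sq_le_sq (h_skew.trans ?_) (by positivity)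
    rw [div_lt_iff₀ (by positivity)] at hn
    rw [Finset.card_range]
    nlinarith
  · have h_eq : x - ((n : ℂ)⁻¹ • ∑ i ∈ Finset.range n, R (f i)) x =
        (n : ℂ)⁻¹ • ∑ i ∈ Finset.range n, (x - R (f i) x) := by
      rw [Finset.sum_sub_distrib, smul_sub, Finset.sum_const, Finset.card_range,
        ← Nat.cast_smul_eq_nsmul ℂ, inv_smul_smul₀ hn_ne, smul_apply, sum_apply]
    rw [h_eq]
    exact norm_inv_smul_sum_range_le hfx n

lemma exists_strictTriangular_norm_sub_le (P : ParamNest E) (x : E) {ε : ℝ} (hε : 0 < ε) :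
    ∃ T ∈ P.strictTriangular, ‖T‖ ≤ 1 ∧ ‖T - star T‖ ≤ ε ∧ ‖x - T x‖ ≤ ε := by
  obtain rfl | hx := eq_or_ne x 0
  · exact ⟨0, zero_mem _, by simp, by simpa using hε.le, by simpa using hε.le⟩
  have hx_pos : 0 < ‖x‖ := norm_pos_iff.2 hx
  obtain ⟨T, hT, hT_norm, hT_star, hTx⟩ := P.exists_strictTriangular_of_norm_eq_one
    (norm_smul_inv_norm (𝕜 := ℂ) hx) (ε := min ε (ε / ‖x‖)) (by positivity)
  refine ⟨T, hT, hT_norm, hT_star.trans (min_le_left _ _), ?_⟩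
  rw [map_smul, ← smul_sub, norm_smul, norm_inv, RCLike.norm_ofReal, abs_norm,
    inv_mul_le_iff₀ hx_pos] at hTx
  calc ‖x - T x‖ ≤ ‖x‖ * min ε (ε / ‖x‖) := hTx
    _ ≤ ‖x‖ * (ε / ‖x‖) := by gcongr; exact min_le_right _ _
    _ = ε := mul_div_cancel₀ ε hx_pos.ne'

lemma exists_strictTriangular_improve (P : ParamNest E) {T : E →L[ℂ] E}
    (hT : T ∈ P.strictTriangular) {c η : ℝ} (hη : 0 < η) (hTc : ‖1 - T‖ ≤ c)
    (hT_star : ‖T - star T‖ ≤ η) (x : E) :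
    ∃ S ∈ P.strictTriangular, ‖1 - S‖ ≤ c * 2 * c ∧ ‖S - star S‖ ≤ (2 * c * 2 + c ^ 2) * η ∧
      ‖x - S x‖ ≤ c * η ∧ ∀ y, ‖y - S y‖ ≤ c * (2 * ‖y - T y‖) := by
  obtain ⟨T', hT', hT'_norm, hT'_star, hT'x⟩ :=
    P.exists_strictTriangular_norm_sub_le (x - T x) hη
  have : 0 ≤ c := (norm_nonneg _).trans hTc
  have h_one : ‖(1 : E →L[ℂ] E)‖ ≤ 1 := norm_id_le
  have hT'_sub : ‖1 - T'‖ ≤ 2 := (norm_sub_le _ _).trans (by linarith)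
  have h_triangular := strictTriangular_le_triangular hT
  have h_expand : 1 - (1 - T) * (1 - T') * (1 - T) =
      T + T + T' - T * T - T * T' - T' * T + T * T' * T := by
    noncomm_ring
  have h_apply (y : E) :
      y - (1 - (1 - T) * (1 - T') * (1 - T)) y = (1 - T) ((1 - T') (y - T y)) := by
    simp
  refine ⟨1 - (1 - T) * (1 - T') * (1 - T), ?_, ?_, ?_, ?_, fun y => ?_⟩
  · rw [h_expand]
    exact add_mem (sub_mem (sub_mem (sub_mem (add_mem (add_mem hT hT) hT')
      (mul_mem_strictTriangular_left h_triangular hT))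
      (mul_mem_strictTriangular_left h_triangular hT'))
      (mul_mem_strictTriangular_right hT' h_triangular))
      (mul_mem_strictTriangular_right
        (mul_mem_strictTriangular_left h_triangular hT') h_triangular)
  · rw [sub_sub_cancel]
    exact norm_mul_le_of_le (norm_mul_le_of_le hTc hT'_sub) hTc
  · have h_skew (S : E →L[ℂ] E) : ‖1 - S - star (1 - S)‖ = ‖S - star S‖ := by
      rw [star_sub, star_one, sub_sub_sub_cancel_left, norm_sub_rev]
    rw [h_skew]
    exact norm_mul_mul_sub_star_le hTc hT'_sub ((h_skew T).trans_le hT_star)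
      ((h_skew T').trans_le hT'_star)
  · rw [h_apply]
    exact le_of_opNorm_le_of_le _ hTc hT'x
  · rw [h_apply]
    exact le_of_opNorm_le_of_le _ hTc (le_of_opNorm_le _ hT'_sub _)

lemma exists_strictTriangular_forall_norm_sub_le (P : ParamNest E) {s : Set E} (hs : s.Finite) :
    ∃ c : ℝ, ∀ ε > 0, ∃ T ∈ P.strictTriangular, ‖1 - T‖ ≤ c ∧ ‖T - star T‖ ≤ ε ∧
      ∀ x ∈ s, ‖x - T x‖ ≤ ε := by
  have h_one : ‖(1 : E →L[ℂ] E)‖ ≤ 1 := norm_id_le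
  induction s, hs using Set.Finite.induction_on with
  | empty =>
    exact ⟨1, fun ε hε => ⟨0, zero_mem _, by rwa [sub_zero], by simpa using hε.le, by simp⟩⟩
  | @insert x s _ _ ih =>
    obtain ⟨c, hc⟩ := ih
    have hc_nonneg : 0 ≤ c := (hc 1 one_pos).elim fun T hT => (norm_nonneg _).trans hT.2.1
    refine ⟨c * 2 * c, fun ε hε => ?_⟩
    obtain ⟨η, hη, hηε⟩ := exists_pos_mul_lt hε (c ^ 2 + 4 * c)
    have : 0 ≤ c * η := mul_nonneg hc_nonneg hη.le
    have : 0 ≤ c ^ 2 * η := by positivity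
    obtain ⟨T, hT, hT_norm, hT_star, hTs⟩ := hc η hη
    obtain ⟨S, hS, hS_norm, hS_star, hSx, hST⟩ :=
      P.exists_strictTriangular_improve hT hη hT_norm hT_star x
    refine ⟨S, hS, hS_norm, hS_star.trans (by linarith), ?_⟩
    rintro y (rfl | hy)
    · exact hSx.trans (by linarith)
    · refine (hST y).trans ?_
      nlinarith [mul_le_mul_of_nonneg_left (hTs y hy) hc_nonneg]

end ParamNest

end Averaging

section Resolvents

open ContinuousLinearMap

variable {E : Type*} [NormedAddCommGroup E] [InnerProductSpace ℂ E]

namespace ParamNest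

/-- A pair `b = (1 - c T)⁻¹`, `b' = (1 + c T)⁻¹` of inverses of perturbations of the identity by
a strictly triangular `T`. Only the identity `b + b' = 2 b' b`, which turns products into linear
expressions, and the uniform norm bound are recorded. -/
structure IsResolventPair (P : ParamNest E) (b b' : E →L[ℂ] E) : Prop where
  one_sub_mem : 1 - b ∈ P.strictTriangular
  one_sub_mem' : 1 - b' ∈ P.strictTriangular
  add_eq : b + b' = (2 : ℂ) • (b' * b)
  norm_le : ‖b‖ ≤ 2
  norm_le' : ‖b'‖ ≤ 2

lemma isResolventPair_one (P : ParamNest E) : P.IsResolventPair 1 1 := by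
  have h_one : ‖(1 : E →L[ℂ] E)‖ ≤ 2 := norm_id_le.trans one_le_two
  exact ⟨by simp, by simp, by rw [one_mul, two_smul], h_one, h_one⟩

end ParamNest

variable [CompleteSpace E]

lemma norm_le_two_mul_norm_apply {S : E →L[ℂ] E} (hS : ‖S + star S - 2‖ ≤ 1) (z : E) :
    ‖z‖ ≤ 2 * ‖S z‖ := by
  have h_inner : (inner ℂ z ((S + star S - 2) z)).re = 2 * (inner ℂ z (S z)).re - 2 * ‖z‖ ^ 2 := by
    have h_two : (2 : E →L[ℂ] E) z = z + z := by
      rw [← one_add_one_eq_two, add_apply, one_apply_eq_self]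
    have h_adj : (inner ℂ z (star S z)).re = (inner ℂ z (S z)).re := by
      rw [star_eq_adjoint, adjoint_inner_right, ← inner_conj_symm, Complex.conj_re]
    have h_self : (inner ℂ z z).re = ‖z‖ ^ 2 := by
      rw [inner_self_eq_norm_sq_to_K]
      norm_cast
    rw [sub_apply, add_apply, inner_sub_right, inner_add_right, Complex.sub_re, Complex.add_re,
      h_adj, h_two, inner_add_right, Complex.add_re, h_self]
    ring
  have h_lower : -‖z‖ ^ 2 ≤ (inner ℂ z ((S + star S - 2) z)).re := by
    have h_norm : ‖inner ℂ z ((S + star S - 2) z)‖ ≤ ‖z‖ * (1 * ‖z‖) :=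
      (norm_inner_le_norm _ _).trans (by gcongr; exact le_of_opNorm_le _ hS z)
    linarith [neg_le_of_abs_le ((Complex.abs_re_le_norm _).trans h_norm)]
  have h_upper : (inner ℂ z (S z)).re ≤ ‖z‖ * ‖S z‖ :=
    (Complex.re_le_norm _).trans (norm_inner_le_norm _ _)
  by_contra! hlt
  nlinarith [(mul_nonneg two_pos.le (norm_nonneg (S z))).trans_lt hlt]

lemma norm_le_two_of_mul_eq_one {S b : E →L[ℂ] E} (hS : ‖S + star S - 2‖ ≤ 1)
    (hSb : S * b = 1) : ‖b‖ ≤ 2 :=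
  opNorm_le_bound _ two_pos.le fun y => by
    have h_apply : S (b y) = y := DFunLike.congr_fun hSb y
    simpa only [h_apply] using norm_le_two_mul_norm_apply hS (b y)

lemma sub_star_eq_of_mul_eq_one {T b b' : E →L[ℂ] E} {c : ℂ} (hc : star c = -c)
    (hb : b * (1 - c • T) = 1) (hb' : b' * (1 - -c • T) = 1) :
    b' - star b = c • (b' * (star T - T) * star b) := by
  have h_adj : (1 + c • star T) * star b = 1 := by
    have h := congr_arg star hb
    rwa [star_mul, star_one, star_sub, star_one, star_smul, hc, neg_smul, sub_neg_eq_add] at h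
  calc b' - star b = b' * ((1 + c • star T) * star b) - b' * (1 - -c • T) * star b := by
        rw [h_adj, hb', one_mul, mul_one]
    _ = c • (b' * (star T - T) * star b) := by
        simp only [neg_smul, sub_neg_eq_add, mul_sub, sub_mul, mul_add, add_mul, mul_one,
          one_mul, mul_smul_comm, smul_mul_assoc, smul_sub, mul_assoc]
        abel

namespace ParamNest

lemma pow_succ_mem_strictTriangular {P : ParamNest E} {T : E →L[ℂ] E}
    (hT : T ∈ P.strictTriangular) (n : ℕ) : T ^ (n + 1) ∈ P.strictTriangular := by
  induction n with
  | zero => rwa [zero_add, pow_one]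
  | succ n ih =>
    rw [pow_succ]
    exact mul_mem_strictTriangular_right ih (strictTriangular_le_triangular hT)

lemma exists_inverse_one_sub {P : ParamNest E} {T : E →L[ℂ] E} (hT : T ∈ P.strictTriangular) :
    ∃ b, (1 - T) * b = 1 ∧ b * (1 - T) = 1 ∧ 1 - b ∈ P.strictTriangular := by
  obtain ⟨n, hn⟩ := isNilpotent_of_mem_strictTriangular hT
  have hn_succ : T ^ (n + 1) = 0 := by rw [pow_succ, hn, zero_mul]
  refine ⟨∑ i ∈ Finset.range (n + 1), T ^ i, ?_, ?_, ?_⟩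
  · rw [mul_neg_geom_sum, hn_succ, sub_zero]
  · rw [geom_sum_mul_neg, hn_succ, sub_zero]
  · rw [Finset.sum_range_succ', pow_zero, sub_add_cancel_right]
    exact neg_mem (Submodule.sum_mem _ fun i _ => pow_succ_mem_strictTriangular hT i)

lemma exists_isResolventPair_of_star_eq_neg {P : ParamNest E} {T : E →L[ℂ] E}
    (hT : T ∈ P.strictTriangular) {c : ℂ} (hc : star c = -c) (hcT : ‖c‖ * ‖T - star T‖ ≤ 1) :
    ∃ b b', P.IsResolventPair b b' ∧ ‖b' - star b‖ ≤ 4 * (‖c‖ * ‖T - star T‖) ∧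
      ∀ x, ‖c‖ * ‖b x‖ ≤ 3 * ‖x‖ + ‖c‖ * (2 * ‖x - T x‖) := by
  obtain ⟨b, hb_right, hb_left, hb⟩ := exists_inverse_one_sub (Submodule.smul_mem _ c hT)
  obtain ⟨b', hb'_right, hb'_left, hb'⟩ := exists_inverse_one_sub (Submodule.smul_mem _ (-c) hT)
  have h_star (d : ℂ) (hd : star d = -d) :
      1 - d • T + star (1 - d • T) - 2 = -d • (T - star T) := by
    rw [star_sub, star_one, star_smul, hd, ← one_add_one_eq_two, neg_smul, neg_smul, smul_sub]
    abel
  have hb_norm : ‖b‖ ≤ 2 := norm_le_two_of_mul_eq_one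
    (by rwa [h_star c hc, norm_smul, norm_neg]) hb_right
  have hb'_norm : ‖b'‖ ≤ 2 := norm_le_two_of_mul_eq_one
    (by rwa [h_star (-c) (by rw [star_neg, hc]), norm_smul, neg_neg]) hb'_right
  refine ⟨b, b', ⟨hb, hb', ?_, hb_norm, hb'_norm⟩, ?_, fun x => ?_⟩
  · calc b + b' = b' * (1 - -c • T) * b + b' * ((1 - c • T) * b) := by
          rw [hb'_left, hb_right, one_mul, mul_one]
      _ = (2 : ℂ) • (b' * b) := by
          rw [neg_smul, two_smul]
          noncomm_ring
  · have h_norm := norm_mul_le_of_le (norm_mul_le_of_le hb'_norm (norm_sub_rev T (star T)).ge)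
      ((norm_star b).trans_le hb_norm)
    rw [sub_star_eq_of_mul_eq_one hc hb_left hb'_left, norm_smul]
    exact (mul_le_mul_of_nonneg_left h_norm (norm_nonneg c)).trans_eq (by ring)
  · have h_apply : c • b x = b x - x + c • b (x - T x) := by
      have h : b (x - c • T x) = x := DFunLike.congr_fun hb_left x
      rw [map_sub, map_smul, sub_eq_iff_eq_add] at h
      rw [map_sub, smul_sub, sub_eq_iff_eq_add'.2 h]
      abel
    have hbx := le_of_opNorm_le _ hb_norm x
    rw [← norm_smul, h_apply]
    refine norm_add_le_of_le ((norm_sub_le _ _).trans (by linarith)) ?_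
    rw [norm_smul]
    exact mul_le_mul_of_nonneg_left (le_of_opNorm_le _ hb_norm _) (norm_nonneg c)

lemma exists_isResolventPair_small_on (P : ParamNest E) {s : Set E} (hs : s.Finite) {η : ℝ}
    (hη : 0 < η) : ∃ b b', P.IsResolventPair b b' ∧ ‖b' - star b‖ ≤ η ∧
      ∀ x ∈ s, ‖b x‖ ≤ η ∧ ‖star b' x‖ ≤ η := by
  obtain ⟨M, hM, hsM⟩ := hs.isBounded.exists_pos_norm_le
  obtain ⟨_, h_near⟩ := P.exists_strictTriangular_forall_norm_sub_le hs
  set κ : ℝ := 12 * M / η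
  have hκ_pos : 0 < κ := by positivity
  have hκη : κ * η = 12 * M := div_mul_cancel₀ _ hη.ne'
  obtain ⟨ε, hε, hε_lt⟩ := exists_pos_mul_lt (lt_min one_pos (half_pos hη)) (4 * κ * (1 + M) + 4)
  have hκε : 0 < κ * ε := by positivity
  have : 0 < κ * ε * M := by positivity
  have hε_one := hε_lt.trans_le (min_le_left _ _)
  have hε_half := hε_lt.trans_le (min_le_right _ _)
  obtain ⟨T, hT, -, hT_star, hTs⟩ := h_near ε hε
  have hc : ‖(κ : ℂ) * Complex.I‖ = κ := by simp [abs_of_pos hκ_pos]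
  have hκT : κ * ‖T - star T‖ ≤ κ * ε := by gcongr
  obtain ⟨b, b', hbb', h_diff, hb⟩ := exists_isResolventPair_of_star_eq_neg hT
    (c := κ * Complex.I) (by simp) (by rw [hc]; nlinarith)
  rw [hc] at h_diff hb
  have hbx : ∀ x ∈ s, ‖b x‖ ≤ η / 2 := fun x hx => by
    refine le_of_mul_le_mul_left (a := κ) ?_ hκ_pos
    nlinarith [hb x, hsM x hx, mul_le_mul_of_nonneg_left (hTs x hx) hκ_pos.le]
  refine ⟨b, b', hbb', by nlinarith, fun x hx => ⟨by linarith [hbx x hx], ?_⟩⟩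
  have h_split : star b' x = b x + star (b' - star b) x := by
    rw [star_sub, star_star, sub_apply, add_sub_cancel]
  have h_adj : ‖star (b' - star b) x‖ ≤ 4 * (κ * ε) * M :=
    le_of_opNorm_le_of_le _ (by rw [norm_star]; linarith) (hsM x hx)
  rw [h_split]
  exact (norm_add_le_of_le (hbx x hx) h_adj).trans (by nlinarith)

lemma exists_isResolventPair (P : ParamNest E) {s : Set E} (hs : s.Finite) {a a' : E →L[ℂ] E}
    (ha : a ∈ finiteRank E E) (ha' : a' ∈ finiteRank E E) {η : ℝ} (hη : 0 < η) :
    ∃ b b', P.IsResolventPair b b' ∧ ‖b' - star b‖ ≤ η ∧ (∀ x ∈ s, ‖b x‖ ≤ η) ∧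
      ‖b * a‖ ≤ η ∧ ‖a' * b'‖ ≤ η := by
  obtain ⟨t, ht, C, hC, hta⟩ := exists_finite_norm_comp_le ha
  obtain ⟨t', ht', C', hC', hta'⟩ := exists_finite_norm_comp_le (adjoint_mem_finiteRank ha')
  obtain ⟨ε, hε, hε_lt⟩ := exists_pos_mul_lt hη (1 + C + C')
  have : 0 ≤ C * ε := mul_nonneg hC hε.le
  have : 0 ≤ C' * ε := mul_nonneg hC' hε.le
  obtain ⟨b, b', hbb', h_diff, hb⟩ :=
    P.exists_isResolventPair_small_on (hs.union (ht.union ht')) hε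
  refine ⟨b, b', hbb', by linarith, fun x hx => (hb x (Or.inl hx)).1.trans (by linarith),
    (hta b ε hε.le fun x hx => (hb x (Or.inr (Or.inl hx))).1).trans (by linarith), ?_⟩
  have h_adj := hta' (star b') ε hε.le fun x hx => (hb x (Or.inr (Or.inr hx))).2
  rw [← norm_star, star_mul]
  exact h_adj.trans (by linarith)

end ParamNest

end Resolvents

section ResolventSequences

open ContinuousLinearMap

variable {E : Type*} [NormedAddCommGroup E] [InnerProductSpace ℂ E]

lemma tendsto_zero_of_tendsto_zero_on_span {b : ℕ → E →L[ℂ] E} {C : ℝ} (hb : ∀ n, ‖b n‖ ≤ C)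
    {s : Set E} (hs : Dense (Submodule.span ℂ s : Set E))
    (hbs : ∀ x ∈ s, Tendsto (fun n => b n x) atTop (𝓝 0)) (y : E) :
    Tendsto (fun n => b n y) atTop (𝓝 0) := by
  have h_span : ∀ z ∈ Submodule.span ℂ s, Tendsto (fun n => b n z) atTop (𝓝 0) := by
    intro z hz
    induction hz using Submodule.span_induction with
    | mem z hz => exact hbs z hz
    | zero => simp
    | add u v _ _ hu hv => simpa using hu.add hv
    | smul a u _ hu => simpa using hu.const_smul a
  have h_equi : Equicontinuous fun n => ⇑(b n) :=
    (LipschitzWith.uniformEquicontinuous _ C.toNNReal fun n =>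
      (b n).lipschitz.weaken
        (norm_toNNReal (a := b n) ▸ Real.toNNReal_le_toNNReal (hb n))).equicontinuous
  exact h_equi.isClosed_setOfPred_tendsto continuous_const |>.closure_subset_iff.2 h_span (hs y)

namespace ParamNest

lemma IsResolventPair.mem_triangular {P : ParamNest E} {b b' : E →L[ℂ] E}
    (h : P.IsResolventPair b b') : b ∈ triangular P P :=
  sub_sub_cancel 1 b ▸
    sub_mem one_mem_triangular (strictTriangular_le_triangular h.one_sub_mem)

lemma IsResolventPair.mem_triangular' {P : ParamNest E} {b b' : E →L[ℂ] E}
    (h : P.IsResolventPair b b') : b' ∈ triangular P P :=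
  sub_sub_cancel 1 b' ▸
    sub_mem one_mem_triangular (strictTriangular_le_triangular h.one_sub_mem')

lemma IsResolventPair.one_sub_mul_one_sub {P : ParamNest E} {b b' : E →L[ℂ] E}
    (h : P.IsResolventPair b b') : (1 - b') * (1 - b) = 1 - b' * b := by
  have h_expand : (1 - b') * (1 - b) = 1 - (b + b') + b' * b := by noncomm_ring
  rw [h_expand, h.add_eq, two_smul]
  abel

/-- The defect of a resolvent sequence: the amount by which the `n`-th step of the telescoping sum
`∑ (b' n * b n - b' (n + 1) * b (n + 1))` differs from the triangular factorisation of it. -/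
def resolventDefect (b b' : ℕ → E →L[ℂ] E) (n : ℕ) : E →L[ℂ] E :=
  b' n * b' (n + 1) * (b (n + 1) * b n) - b' (n + 1) * b (n + 1)

lemma resolventDefect_eq (b b' : ℕ → E →L[ℂ] E) (n : ℕ) :
    resolventDefect b b' n =
    -((1 - b' n) * b' (n + 1) * (b (n + 1) * b n)) - b' (n + 1) * (b (n + 1) * (1 - b n)) := by
  unfold resolventDefect
  noncomm_ring

variable [CompleteSpace E]

/-- A sequence of resolvent pairs starting at the identity, each of which almost annihilates the
finite-rank part of its predecessor; `η` controls all the errors. -/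
structure IsResolventSeq (P : ParamNest E) (η : ℕ → ℝ) (b b' : ℕ → E →L[ℂ] E) : Prop where
  zero : b 0 = 1
  zero' : b' 0 = 1
  pair : ∀ n, P.IsResolventPair (b n) (b' n)
  norm_sub_star_le : ∀ n, ‖b' n - star (b n)‖ ≤ η n
  norm_mul_le : ∀ n, ‖b (n + 1) * (1 - b n)‖ ≤ η (n + 1)
  norm_mul_le' : ∀ n, ‖(1 - b' n) * b' (n + 1)‖ ≤ η (n + 1)

lemma exists_isResolventSeq (P : ParamNest E) (x : ℕ → E) {η : ℕ → ℝ} (hη : ∀ n, 0 < η n) :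
    ∃ b b', P.IsResolventSeq η b b' ∧ ∀ n, ∀ i ≤ n, ‖b (n + 1) (x i)‖ ≤ η (n + 1) := by
  let Pairs := {p : (E →L[ℂ] E) × (E →L[ℂ] E) // P.IsResolventPair p.1 p.2}
  have h_step (n : ℕ) (p : Pairs) : ∃ q : Pairs, ‖q.1.2 - star q.1.1‖ ≤ η (n + 1) ∧
      (∀ y ∈ x '' Iic n, ‖q.1.1 y‖ ≤ η (n + 1)) ∧ ‖q.1.1 * (1 - p.1.1)‖ ≤ η (n + 1) ∧
      ‖(1 - p.1.2) * q.1.2‖ ≤ η (n + 1) := by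
    obtain ⟨b, b', hbb', h⟩ := P.exists_isResolventPair ((finite_Iic n).image x)
      (strictTriangular_le_finiteRank p.2.one_sub_mem)
      (strictTriangular_le_finiteRank p.2.one_sub_mem') (hη (n + 1))
    exact ⟨⟨(b, b'), hbb'⟩, h⟩
  choose next h_star h_small h_mul h_mul' using h_step
  let pairs : ℕ → Pairs := fun n => Nat.rec ⟨(1, 1), P.isResolventPair_one⟩ next n
  refine ⟨fun n => (pairs n).1.1, fun n => (pairs n).1.2, ⟨rfl, rfl, fun n => (pairs n).2,
    fun n => ?_, fun n => h_mul n _, fun n => h_mul' n _⟩,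
    fun n i hi => h_small n _ _ (mem_image_of_mem x hi)⟩
  cases n with
  | zero => simpa [pairs] using (hη 0).le
  | succ n => exact h_star n _

namespace IsResolventSeq

variable {P : ParamNest E} {η : ℕ → ℝ} {b b' : ℕ → E →L[ℂ] E}

lemma mul_mem_strictTriangular (h : P.IsResolventSeq η b b') (n : ℕ) :
    (1 - b (n + 1)) * b n ∈ P.strictTriangular :=
  mul_mem_strictTriangular_right (h.pair _).one_sub_mem (h.pair n).mem_triangular

lemma mul_mem_strictTriangular' (h : P.IsResolventSeq η b b') (n : ℕ) :
    b' n * (1 - b' (n + 1)) ∈ P.strictTriangular :=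
  mul_mem_strictTriangular_left (h.pair n).mem_triangular' (h.pair _).one_sub_mem'

lemma norm_mul_sub_star_mul_le (h : P.IsResolventSeq η b b') (n : ℕ) :
    ‖b' n * (1 - b' (n + 1)) - star ((1 - b (n + 1)) * b n)‖ ≤ 3 * η n + 2 * η (n + 1) := by
  have h_split : b' n * (1 - b' (n + 1)) - star ((1 - b (n + 1)) * b n) =
      (b' n - star (b n)) * (1 - b' (n + 1)) - star (b n) * (b' (n + 1) - star (b (n + 1))) := by
    rw [star_mul, star_sub, star_one]
    noncomm_ring
  have h_one : ‖(1 : E →L[ℂ] E)‖ ≤ 1 := norm_id_le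
  have h_sub : ‖1 - b' (n + 1)‖ ≤ 3 :=
    (norm_sub_le _ _).trans (by linarith [(h.pair (n + 1)).norm_le'])
  rw [h_split]
  refine (norm_sub_le_of_le (norm_mul_le_of_le (h.norm_sub_star_le n) h_sub)
    (norm_mul_le_of_le ((norm_star _).trans_le (h.pair n).norm_le)
      (h.norm_sub_star_le _))).trans_eq (by ring)

lemma resolventDefect_mem_finiteRank (h : P.IsResolventSeq η b b') (n : ℕ) :
    resolventDefect b b' n ∈ finiteRank E E := by
  have h_mem := strictTriangular_le_finiteRank (h.pair n).one_sub_mem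
  have h_mem' := strictTriangular_le_finiteRank (h.pair n).one_sub_mem'
  rw [resolventDefect_eq]
  exact sub_mem
    (neg_mem (mul_mem_finiteRank_right (mul_mem_finiteRank_right h_mem' _) _))
    (mul_mem_finiteRank_left _ (mul_mem_finiteRank_left _ h_mem))

lemma norm_resolventDefect_le (h : P.IsResolventSeq η b b') (n : ℕ) :
    ‖resolventDefect b b' n‖ ≤ 6 * η (n + 1) := by
  rw [resolventDefect_eq]
  refine (norm_sub_le_of_le ((norm_neg _).trans_le (norm_mul_le_of_le (h.norm_mul_le' n)
    (norm_mul_le_of_le (h.pair _).norm_le (h.pair n).norm_le)))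
    (norm_mul_le_of_le (h.pair _).norm_le' (h.norm_mul_le n))).trans_eq (by ring)

lemma sum_mul_add_resolventDefect (h : P.IsResolventSeq η b b') (m : ℕ) :
    ∑ n ∈ Finset.range m, (b' n * (1 - b' (n + 1)) * ((1 - b (n + 1)) * b n) +
      resolventDefect b b' n) =
      1 - b' m * b m := by
  induction m with
  | zero => simp [h.zero, h.zero']
  | succ m ih =>
    have h_mul : b' m * (1 - b' (m + 1)) * ((1 - b (m + 1)) * b m) =
        b' m * (1 - b' (m + 1) * b (m + 1)) * b m := by
      rw [← (h.pair (m + 1)).one_sub_mul_one_sub]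
      noncomm_ring
    rw [Finset.sum_range_succ, ih, h_mul, resolventDefect]
    noncomm_ring

end IsResolventSeq

/-- A factorisation `1 = ∑ (L' n * L n + e n)` of the identity into products of strictly
triangular operators with `L' n` close to the adjoint of `L n`, up to small finite-rank errors. -/
structure IsFactorisation (P : ParamNest E) (ε : ℝ) (L L' e : ℕ → E →L[ℂ] E) : Prop where
  mem : ∀ n, L n ∈ P.strictTriangular
  mem' : ∀ n, L' n ∈ P.strictTriangular
  norm_sub_star_le : ∀ n, ‖L' n - star (L n)‖ ≤ ε * (1 / 2) ^ n
  error_mem : ∀ n, e n ∈ finiteRank E E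
  norm_error_le : ∀ n, ‖e n‖ ≤ ε * (1 / 2) ^ n
  norm_sum_le : ∀ m, ‖∑ n ∈ Finset.range m, (L' n * L n + e n)‖ ≤ 5
  tendsto_sum : ∀ y, Tendsto (fun m => (∑ n ∈ Finset.range m, (L' n * L n + e n)) y) atTop (𝓝 y)

lemma exists_isFactorisation (P : ParamNest E) {x : ℕ → E}
    (hx : Dense (Submodule.span ℂ (range x) : Set E)) {ε : ℝ} (hε : 0 < ε) :
    ∃ L L' e, P.IsFactorisation ε L L' e := by
  have hη (n : ℕ) : 0 < ε / 6 * (1 / 2) ^ n := by positivity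
  obtain ⟨b, b', h, hb⟩ := P.exists_isResolventSeq x hη
  refine ⟨_, _, _, h.mul_mem_strictTriangular, h.mul_mem_strictTriangular',
    fun n => (h.norm_mul_sub_star_mul_le n).trans ?_, h.resolventDefect_mem_finiteRank,
    fun n => (h.norm_resolventDefect_le n).trans ?_, fun m => ?_, fun y => ?_⟩
  · rw [pow_succ]
    linarith [hη n]
  · rw [pow_succ]
    linarith [hη n]
  · rw [h.sum_mul_add_resolventDefect]
    exact (norm_sub_le_of_le norm_id_le
      (norm_mul_le_of_le (h.pair m).norm_le' (h.pair m).norm_le)).trans (by norm_num)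
  · have h_small : ∀ z ∈ range x, Tendsto (fun n => b n z) atTop (𝓝 0) := by
      rintro _ ⟨i, rfl⟩
      rw [← tendsto_add_atTop_iff_nat 1]
      refine squeeze_zero_norm' ((eventually_ge_atTop i).mono fun n hn => hb n i hn) ?_
      have h_pow := (tendsto_pow_atTop_nhds_zero_of_lt_one (r := (1 / 2 : ℝ)) (by norm_num)
        (by norm_num)).const_mul (ε / 6)
      rw [mul_zero] at h_pow
      exact (tendsto_add_atTop_iff_nat 1).2 h_pow
    have hb_lim :=
      tendsto_zero_of_tendsto_zero_on_span (fun n => (h.pair n).norm_le) hx h_small y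
    have h_lim : Tendsto (fun n => b' n (b n y)) atTop (𝓝 0) := by
      refine squeeze_zero_norm (fun n => le_of_opNorm_le _ (h.pair n).norm_le' _) ?_
      simpa using hb_lim.norm.const_mul 2
    have h_sub := h_lim.const_sub y
    rw [sub_zero] at h_sub
    simp only [h.sum_mul_add_resolventDefect]
    exact h_sub

end ParamNest

end ResolventSequences

section PartialIsometries

open InnerProductSpace ContinuousLinearMap

variable {E F : Type*} [NormedAddCommGroup E] [InnerProductSpace ℂ E]
  [NormedAddCommGroup F] [InnerProductSpace ℂ F]

lemma exists_norm_eq_one_mem_orthogonal {W U : Submodule ℂ E} (hW : ¬FiniteDimensional ℂ W)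
    [FiniteDimensional ℂ U] : ∃ y ∈ W, ‖y‖ = 1 ∧ y ∈ Uᗮ := by
  have h_ker : ¬Function.Injective (U.orthogonalProjectionOnto.toLinearMap ∘ₗ W.subtype) :=
    fun h => hW (Module.Finite.of_injective _ h)
  rw [← LinearMap.ker_eq_bot, Submodule.eq_bot_iff] at h_ker
  push Not at h_ker
  obtain ⟨⟨y, hyW⟩, hy_ker, hy⟩ := h_ker
  have hyU : y ∈ Uᗮ := Submodule.orthogonalProjectionOnto_eq_zero_iff.1 hy_ker
  exact ⟨((‖y‖ : ℂ)⁻¹) • y, W.smul_mem _ hyW,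
    norm_smul_inv_norm fun h => hy (Subtype.ext h), Uᗮ.smul_mem _ hyU⟩

lemma exists_orthonormal_mem_orthogonal {ι : Type*} [Finite ι] {W : ι → Submodule ℂ E}
    (hW : ∀ i, ¬FiniteDimensional ℂ (W i)) (U : Submodule ℂ E) [FiniteDimensional ℂ U] :
    ∃ k : ι → E, Orthonormal ℂ k ∧ ∀ i, k i ∈ W i ∧ k i ∈ Uᗮ := by
  classical
  have := Fintype.ofFinite ι
  suffices h : ∀ s : Finset ι, ∃ k : ι → E, (∀ i ∈ s, k i ∈ W i ∧ ‖k i‖ = 1 ∧ k i ∈ Uᗮ) ∧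
      (s : Set ι).Pairwise fun i j => inner ℂ (k i) (k j) = 0 by
    obtain ⟨k, hk, hk_orth⟩ := h Finset.univ
    have hk' := fun i => hk i (Finset.mem_univ i)
    exact ⟨k, ⟨fun i => (hk' i).2.1, fun i j hij => hk_orth (by simp) (by simp) hij⟩,
      fun i => ⟨(hk' i).1, (hk' i).2.2⟩⟩
  intro s
  induction s using Finset.induction_on with
  | empty => exact ⟨0, by simp, by simp⟩
  | insert a s ha ih =>
    obtain ⟨k, hk, hk_orth⟩ := ih
    have : FiniteDimensional ℂ (Submodule.span ℂ (k '' s)) :=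
      FiniteDimensional.span_of_finite ℂ (s.finite_toSet.image k)
    obtain ⟨y, hyW, hy_norm, hyU⟩ :=
      exists_norm_eq_one_mem_orthogonal (U := U ⊔ Submodule.span ℂ (k '' s)) (hW a)
    have h_ne {i : ι} (hi : i ∈ s) : i ≠ a := fun h => ha (h ▸ hi)
    refine ⟨Function.update k a y, fun i hi => ?_, ?_⟩
    · obtain rfl | hi := Finset.mem_insert.1 hi
      · rw [Function.update_self]
        exact ⟨hyW, hy_norm, Submodule.orthogonal_le le_sup_left hyU⟩
      · rw [Function.update_of_ne (h_ne hi)]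
        exact hk i hi
    · rw [Finset.coe_insert, pairwise_insert_of_notMem (by exact_mod_cast ha)]
      refine ⟨fun i hi j hj hij => ?_, fun i hi => ?_⟩
      · beta_reduce
        rw [Function.update_of_ne (h_ne hi), Function.update_of_ne (h_ne hj)]
        exact hk_orth hi hj hij
      · rw [Function.update_self, Function.update_of_ne (h_ne hi), inner_eq_zero_symm, and_self]
        exact hyU _ (Submodule.mem_sup_right (Submodule.subset_span (mem_image_of_mem k hi)))

namespace ParamNest

/-- The range of the interval projection `P t - P s`. -/
def intervalSpace (P : ParamNest E) (s t : ℝ) : Submodule ℂ E where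
  carrier := {x | P t x = x ∧ P s x = 0}
  add_mem' hx hy := ⟨by rw [map_add, hx.1, hy.1], by rw [map_add, hx.2, hy.2, add_zero]⟩
  zero_mem' := ⟨map_zero _, map_zero _⟩
  smul_mem' c x hx := ⟨by rw [map_smul, hx.1], by rw [map_smul, hx.2, smul_zero]⟩

variable {P : ParamNest E} {Q : ParamNest F}

lemma proj_sub_proj_mem_intervalSpace {s t : ℝ} (hst : s ≤ t) (x : E) :
    P t x - P s x ∈ P.intervalSpace s t :=
  ⟨by rw [map_sub, proj_proj, P.proj_proj_of_ge s t hst],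
    by rw [map_sub, proj_proj, proj_proj_of_le hst, sub_self]⟩

lemma intervalSpace_mono {s s' t t' : ℝ} (hs : s' ≤ s) (ht : t ≤ t') :
    P.intervalSpace s t ≤ P.intervalSpace s' t' := fun x hx =>
  ⟨by rw [← hx.1, P.proj_proj_of_ge _ _ ht],
    by rw [← proj_proj_of_le hs, hx.2, map_zero]⟩

lemma inner_proj_sub_proj {s t : ℝ} {y : E} (hy : y ∈ P.intervalSpace s t) (x : E) :
    inner ℂ y (P t x - P s x) = inner ℂ y x := by
  rw [inner_sub_right, ← P.inner_proj_left, ← P.inner_proj_left, hy.1, hy.2, inner_zero_left,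
    sub_zero]

lemma inner_eq_zero_of_mem_intervalSpace {r s s' t : ℝ} (hs : s ≤ s') {x y : E}
    (hx : x ∈ P.intervalSpace r s) (hy : y ∈ P.intervalSpace s' t) : inner ℂ x y = 0 := by
  rw [← hx.1, P.inner_proj_left, ← proj_proj_of_le hs, hy.2, map_zero, inner_zero_right]

lemma sum_proj_sub_proj {m : ℕ} (hm : m ≠ 0) (x : E) :
    ∑ j : Fin m, (P ((j + 1 : ℕ) / m) x - P (j / m) x) = x := by
  have hm' : (m : ℝ) ≠ 0 := Nat.cast_ne_zero.2 hm
  rw [Fin.sum_univ_eq_sum_range fun j => P ((j + 1 : ℕ) / m) x - P (j / m) x,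
    Finset.sum_range_sub fun j : ℕ => P (j / m) x, div_self hm', P.proj_of_one_le 1 le_rfl,
    P.proj_of_nonpos _ (by simp)]
  simp

/-- The `j`-th of `m` equally long intervals of the nest. -/
noncomputable abbrev gridSpace (P : ParamNest E) {m : ℕ} (j : Fin m) : Submodule ℂ E :=
  P.intervalSpace (j / m) ((j + 1 : ℕ) / m)

lemma exists_orthonormal_gridSpace (P : ParamNest E) (W : Submodule ℂ E) [FiniteDimensional ℂ W]
    {m : ℕ} (hm : m ≠ 0) : ∃ (ι : Type) (_ : Fintype ι) (j : ι → Fin m) (g : ι → E),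
      Orthonormal ℂ g ∧ (∀ i, g i ∈ P.gridSpace (j i)) ∧
      ∀ x ∈ W, ∑ i, inner ℂ (g i) x • g i = x := by
  let D (j : Fin m) : E →L[ℂ] E := P ((j + 1 : ℕ) / m) - P (j / m)
  let W' (j : Fin m) : Submodule ℂ E := W.map (D j).toLinearMap
  have hW' (j : Fin m) : W' j ≤ P.gridSpace j := by
    rintro _ ⟨x, -, rfl⟩
    exact proj_sub_proj_mem_intervalSpace (by gcongr; lia) x
  have h_orth : OrthogonalFamily ℂ (fun j => W' j) fun j => (W' j).subtypeₗᵢ := by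
    have h_lt {i j : Fin m} (hij : i < j) (x : W' i) (y : W' j) : inner ℂ (x : E) y = 0 :=
      inner_eq_zero_of_mem_intervalSpace (by gcongr; exact hij) (hW' i x.2) (hW' j y.2)
    intro i j hij x y
    obtain hij | hij := hij.lt_or_gt
    · exact h_lt hij x y
    · exact inner_eq_zero_symm.1 (h_lt hij y x)
  let g (j : Fin m) := stdOrthonormalBasis ℂ (W' j)
  refine ⟨Σ j, Fin (Module.finrank ℂ (W' j)), inferInstance, Sigma.fst, fun i => g i.1 i.2,
    h_orth.orthonormal_sigma_orthonormal fun j => (g j).orthonormal,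
    fun i => hW' i.1 (g i.1 i.2).2, fun x hx => ?_⟩
  have h_repr (j : Fin m) : ∑ i, inner ℂ (g j i : E) x • (g j i : E) = D j x := by
    have h := congr_arg Subtype.val ((g j).sum_repr' ⟨D j x, x, hx, rfl⟩)
    rw [AddSubmonoidClass.coe_finsetSum] at h
    refine (Finset.sum_congr rfl fun i _ => ?_).trans h
    rw [Submodule.coe_smul, Submodule.coe_inner]
    exact congr_arg (· • (g j i : E)) (inner_proj_sub_proj (hW' j (g j i).2) x).symm
  rw [Fintype.sum_sigma]
  exact (Finset.sum_congr rfl fun j _ => h_repr j).trans (sum_proj_sub_proj hm x)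

lemma sum_rankOne_mem_lowering {m : ℕ} {δ : ℝ} (hδ : 1 / (m : ℝ) ≤ δ) {ι : Type*} [Fintype ι]
    {j : ι → Fin m} {k : ι → F} {g : ι → E} (hk : ∀ i, k i ∈ Q.gridSpace (j i))
    (hg : ∀ i, g i ∈ P.gridSpace (j i)) : ∑ i, rankOne ℂ (k i) (g i) ∈ lowering P Q (-δ) := by
  refine sum_mem fun i _ => lowering_anti ?_ (rankOne_mem_lowering (hk i).1 (hg i).2)
  push_cast
  rw [add_div]
  linarith

/-- All nonzero intervals of the nest have infinite-dimensional range. -/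
def IsThick (P : ParamNest E) : Prop :=
  ∀ s t, 0 ≤ s → s < t → t ≤ 1 → ¬FiniteDimensional ℂ (P.intervalSpace s t)

variable [CompleteSpace E] [CompleteSpace F]

lemma IsThick.exists_partialIsometry (hQ : Q.IsThick) (P : ParamNest E) (W : Submodule ℂ E)
    [FiniteDimensional ℂ W] (U : Submodule ℂ F) [FiniteDimensional ℂ U] {δ : ℝ} (hδ : 0 < δ) :
    ∃ V ∈ finiteRank E F, ‖V‖ ≤ 1 ∧ (∀ x ∈ W, adjoint V (V x) = x) ∧ (∀ x, V x ∈ Uᗮ) ∧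
      V ∈ lowering P Q (-δ) ∧ adjoint V ∈ lowering Q P (-δ) := by
  obtain ⟨n, hn⟩ := exists_nat_one_div_lt hδ
  have hnδ : 1 / ((n + 1 : ℕ) : ℝ) ≤ δ := by exact_mod_cast hn.le
  obtain ⟨ι, _, j, g, hg, hg_mem, hg_sum⟩ := P.exists_orthonormal_gridSpace W n.succ_ne_zero
  obtain ⟨k, hk, hk_mem⟩ := exists_orthonormal_mem_orthogonal (W := fun i => Q.gridSpace (j i))
    (fun i => hQ _ _ (by positivity) (by gcongr; lia) (natCast_div_mem_Icc (j i).2).2) U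
  have h_apply (x : E) : (∑ i, rankOne ℂ (k i) (g i)) x = ∑ i, inner ℂ (g i) x • k i := by
    simp only [sum_apply, rankOne_apply]
  have h_adj : adjoint (∑ i, rankOne ℂ (k i) (g i)) = ∑ i, rankOne ℂ (g i) (k i) := by
    simp only [map_sum, adjoint_rankOne]
  refine ⟨∑ i, rankOne ℂ (k i) (g i), sum_mem fun i _ => rankOne_mem_finiteRank _ _,
    norm_sum_rankOne_le_one hk hg, fun x hx => ?_, fun x => ?_,
    sum_rankOne_mem_lowering hnδ (fun i => (hk_mem i).1) hg_mem, ?_⟩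
  · simp only [h_adj, h_apply, sum_apply, rankOne_apply, hk.inner_right_fintype]
    exact hg_sum x hx
  · rw [h_apply]
    exact sum_mem fun i _ => Uᗮ.smul_mem _ (hk_mem i).2
  · rw [h_adj]
    exact sum_rankOne_mem_lowering hnδ hg_mem fun i => (hk_mem i).1

/-- Finite-rank contractions `V n` with mutually orthogonal ranges, isometric on the range of
`L n`, which move the nest so little that they preserve triangularity of `L n` and `L' n`. -/
structure IsSpreading (P : ParamNest E) (Q : ParamNest F) (L L' : ℕ → E →L[ℂ] E)
    (V : ℕ → E →L[ℂ] F) : Prop where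
  mem_finiteRank : ∀ n, V n ∈ finiteRank E F
  norm_le : ∀ n, ‖V n‖ ≤ 1
  adjoint_apply : ∀ n x, adjoint (V n) (V n (L n x)) = L n x
  inner_eq_zero : ∀ n m, n ≠ m → ∀ x y, inner ℂ (V n x) (V m y) = 0
  comp_mem : ∀ n, V n ∘L L n ∈ triangular P Q
  comp_mem' : ∀ n, L' n ∘L adjoint (V n) ∈ triangular Q P

lemma IsThick.exists_spreading_step (hQ : Q.IsThick) {S S' : E →L[ℂ] E}
    (hS : S ∈ P.strictTriangular) (hS' : S' ∈ P.strictTriangular) (U : Submodule ℂ F)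
    [FiniteDimensional ℂ U] : ∃ V ∈ finiteRank E F, ‖V‖ ≤ 1 ∧
      (∀ x, adjoint V (V (S x)) = S x) ∧ (∀ x, V x ∈ Uᗮ) ∧ V ∘L S ∈ triangular P Q ∧
      S' ∘L adjoint V ∈ triangular Q P := by
  have := finiteDimensional_range_of_mem_finiteRank (strictTriangular_le_finiteRank hS)
  obtain ⟨-, δ, hδ, hSδ⟩ := hS
  obtain ⟨-, δ', hδ', hSδ'⟩ := hS'
  obtain ⟨V, hV, hV_norm, hV_adj, hVU, hV_lowering, hV_lowering'⟩ :=
    hQ.exists_partialIsometry P S.range U (lt_min hδ hδ')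
  refine ⟨V, hV, hV_norm, fun x => hV_adj _ ⟨x, rfl⟩, hVU, ?_, ?_⟩
  · rw [triangular, ← add_neg_cancel (min δ δ')]
    exact comp_mem_lowering hV_lowering (lowering_anti (min_le_left _ _) hSδ)
  · rw [triangular, ← neg_add_cancel (min δ δ')]
    exact comp_mem_lowering (lowering_anti (min_le_right _ _) hSδ') hV_lowering'

lemma IsThick.exists_isSpreading (hQ : Q.IsThick) {L L' : ℕ → E →L[ℂ] E}
    (hL : ∀ n, L n ∈ P.strictTriangular) (hL' : ∀ n, L' n ∈ P.strictTriangular) :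
    ∃ V, P.IsSpreading Q L L' V := by
  let Subspaces := {U : Submodule ℂ F // FiniteDimensional ℂ U}
  have h_step (n : ℕ) (U : Subspaces) := have := U.2
    hQ.exists_spreading_step (hL n) (hL' n) U.1
  choose V hV hV_norm hV_adj hVU hV_comp hV_comp' using h_step
  let next (n : ℕ) (U : Subspaces) : Subspaces := ⟨U.1 ⊔ (V n U).range, by
    have := U.2
    have := finiteDimensional_range_of_mem_finiteRank (hV n U)
    infer_instance⟩
  let U : ℕ → Subspaces := fun n => Nat.rec ⟨⊥, inferInstance⟩ next n
  have hU_mono : Monotone fun n => (U n).1 := monotone_nat_of_le_succ fun n => le_sup_left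
  have h_lt {n m : ℕ} (hnm : n < m) (x y : E) : inner ℂ (V n (U n) x) (V m (U m) y) = 0 :=
    hVU m (U m) y _ (hU_mono hnm (Submodule.mem_sup_right ⟨x, rfl⟩))
  refine ⟨fun n => V n (U n), fun n => hV n _, fun n => hV_norm n _, fun n => hV_adj n _,
    fun n m hnm x y => ?_, fun n => hV_comp n _, fun n => hV_comp' n _⟩
  obtain hnm | hnm := hnm.lt_or_gt
  · exact h_lt hnm x y
  · exact inner_eq_zero_symm.1 (h_lt hnm y x)

end ParamNest

end PartialIsometries

section Approximable

open InnerProductSpace ContinuousLinearMap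

variable {E F G E' F' : Type*} [NormedAddCommGroup E] [InnerProductSpace ℂ E]
  [NormedAddCommGroup F] [InnerProductSpace ℂ F] [NormedAddCommGroup G] [InnerProductSpace ℂ G]
  [NormedAddCommGroup E'] [InnerProductSpace ℂ E'] [NormedAddCommGroup F'] [InnerProductSpace ℂ F']

/-- The norm limits of finite-rank operators; on Hilbert spaces these are the compact operators. -/
noncomputable def approximable (E F : Type*) [NormedAddCommGroup E] [InnerProductSpace ℂ E]
    [NormedAddCommGroup F] [InnerProductSpace ℂ F] : Submodule ℂ (E →L[ℂ] F) :=
  (finiteRank E F).topologicalClosure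

lemma finiteRank_le_approximable : finiteRank E F ≤ approximable E F :=
  Submodule.le_topologicalClosure _

lemma map_mem_approximable {f : (E →L[ℂ] F) → E' →L[ℂ] F'} (hf : Continuous f)
    (hf_mem : ∀ T ∈ finiteRank E F, f T ∈ finiteRank E' F') {T : E →L[ℂ] F}
    (hT : T ∈ approximable E F) : f T ∈ approximable E' F' := by
  have hT : T ∈ closure (finiteRank E F : Set (E →L[ℂ] F)) := hT
  exact map_mem_closure hf hT hf_mem

lemma comp_mem_approximable_left (S : F →L[ℂ] G) {T : E →L[ℂ] F} (hT : T ∈ approximable E F) :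
    S ∘L T ∈ approximable E G :=
  map_mem_approximable (f := fun T => S ∘L T) (by fun_prop)
    (fun _ => comp_mem_finiteRank_left S) hT

lemma isCompactOperator_of_mem_approximable [CompleteSpace F] {T : E →L[ℂ] F}
    (hT : T ∈ approximable E F) : IsCompactOperator T := by
  have hT : T ∈ closure (finiteRank E F : Set (E →L[ℂ] F)) := hT
  exact closure_minimal (fun S hS => isCompactOperator_of_mem_finiteRank hS)
    isClosed_setOfPred_isCompactOperator hT

lemma tsum_mem_approximable {T : ℕ → E →L[ℂ] F} (hT : ∀ n, T n ∈ finiteRank E F)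
    (hT_sum : Summable T) : ∑' n, T n ∈ approximable E F :=
  (Submodule.isClosed_topologicalClosure _).mem_of_tendsto hT_sum.hasSum <|
    Eventually.of_forall fun _ => sum_mem fun n _ => finiteRank_le_approximable (hT n)

variable [CompleteSpace E]

lemma comp_mem_approximable_right [CompleteSpace G] {T : E →L[ℂ] F} (hT : T ∈ approximable E F)
    (S : G →L[ℂ] E) : T ∘L S ∈ approximable G F :=
  map_mem_approximable (f := fun T => T ∘L S) (by fun_prop)
    (fun _ hT => comp_mem_finiteRank_right hT S) hT

lemma adjoint_mem_approximable [CompleteSpace F] {T : E →L[ℂ] F} (hT : T ∈ approximable E F) :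
    adjoint T ∈ approximable F E :=
  map_mem_approximable (LinearIsometryEquiv.continuous _) (fun _ => adjoint_mem_finiteRank) hT

end Approximable

section Embedding

open ContinuousLinearMap

variable {E F : Type*} [NormedAddCommGroup E] [InnerProductSpace ℂ E]
  [NormedAddCommGroup F] [InnerProductSpace ℂ F]

namespace ParamNest

variable {P : ParamNest E} {Q : ParamNest F} {L L' e : ℕ → E →L[ℂ] E} {V : ℕ → E →L[ℂ] F}

lemma mem_triangular_of_hasSum_inner {A : ℕ → E →L[ℂ] F} {B : E →L[ℂ] F}
    (hA : ∀ n, A n ∈ triangular P Q)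
    (hB : ∀ z x, HasSum (fun n => inner ℂ z (A n x)) (inner ℂ z (B x))) : B ∈ triangular P Q := by
  rw [mem_triangular_iff]
  refine fun t x => ext_inner_left ℂ fun z => ?_
  rw [← Q.inner_proj_left]
  refine (hB (Q t z) (P t x)).unique ((hB z (P t x)).congr_fun fun n => ?_)
  rw [Q.inner_proj_left, mem_triangular_iff.1 (hA n)]

/-- `A` embeds the nest `P` triangularly into the nest `Q`; the left inverse `B` is triangular too,
and `A` is an isometry up to compact operators. -/
structure IsEmbedding (P : ParamNest E) (Q : ParamNest F) [CompleteSpace E] [CompleteSpace F]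
    (A : E →L[ℂ] F) (B : F →L[ℂ] E) : Prop where
  mem : A ∈ triangular P Q
  mem' : B ∈ triangular Q P
  comp_eq_one : B ∘L A = 1
  sub_adjoint_mem : B - adjoint A ∈ approximable F E

variable [CompleteSpace E]

namespace IsFactorisation

lemma summable_error {ε : ℝ} (h : P.IsFactorisation ε L L' e) : Summable e :=
  .of_norm_bounded (summable_geometric_two.mul_left ε) h.norm_error_le

lemma norm_sum_error_le (h : P.IsFactorisation (1 / 4) L L' e) (m : ℕ) :
    ‖∑ n ∈ Finset.range m, e n‖ ≤ 1 / 2 := by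
  have h_geom := summable_geometric_two.sum_le_tsum (Finset.range m) fun _ _ => by positivity
  calc ‖∑ n ∈ Finset.range m, e n‖ ≤ ∑ n ∈ Finset.range m, 1 / 4 * (1 / 2) ^ n :=
        norm_sum_le_of_le _ fun n _ => h.norm_error_le n
    _ ≤ 1 / 2 := by rw [← Finset.mul_sum]; linarith [tsum_geometric_two]

lemma norm_tsum_error_le (h : P.IsFactorisation (1 / 4) L L' e) : ‖∑' n, e n‖ ≤ 1 / 2 :=
  le_of_tendsto h.summable_error.hasSum.tendsto_sum_nat.norm <|
    Eventually.of_forall h.norm_sum_error_le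

lemma norm_sum_mul_le (h : P.IsFactorisation (1 / 4) L L' e) (m : ℕ) :
    ‖∑ n ∈ Finset.range m, L' n * L n‖ ≤ 11 / 2 := by
  have h_split : ∑ n ∈ Finset.range m, L' n * L n =
      ∑ n ∈ Finset.range m, (L' n * L n + e n) - ∑ n ∈ Finset.range m, e n := by
    rw [Finset.sum_add_distrib, add_sub_cancel_right]
  rw [h_split]
  linarith [norm_sub_le_of_le (h.norm_sum_le m) (h.norm_sum_error_le m)]

lemma norm_apply_sq_le (h : P.IsFactorisation (1 / 4) L L' e) (n : ℕ) (z : E) :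
    ‖L n z‖ ^ 2 ≤ 2 * (inner ℂ z (L' n (L n z))).re + (1 / 2) ^ n * ‖z‖ ^ 2 := by
  have h_inner : (inner ℂ z (star (L n) (L n z))).re = ‖L n z‖ ^ 2 := by
    rw [star_eq_adjoint, adjoint_inner_right, inner_self_eq_norm_sq_to_K]
    simp [← Complex.ofReal_pow]
  have h_diff : -(inner ℂ z ((L' n - star (L n)) (L n z))).re ≤
      ‖z‖ * (1 / 4 * (1 / 2) ^ n * ‖L n z‖) :=
    calc _ ≤ ‖z‖ * ‖(L' n - star (L n)) (L n z)‖ :=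
          (neg_le_abs _).trans ((Complex.abs_re_le_norm _).trans (norm_inner_le_norm _ _))
      _ ≤ _ := by gcongr; exact le_of_opNorm_le _ (h.norm_sub_star_le n) _
  rw [sub_apply, inner_sub_right, Complex.sub_re, h_inner] at h_diff
  have hp : (0 : ℝ) < (1 / 2) ^ n := by positivity
  have hp1 : (1 / 2 : ℝ) ^ n ≤ 1 := pow_le_one₀ (by norm_num) (by norm_num)
  nlinarith [mul_nonneg hp.le (sq_nonneg (‖z‖ - ‖L n z‖)),
    mul_nonneg (sub_nonneg.2 hp1) (sq_nonneg ‖L n z‖), mul_nonneg hp.le (sq_nonneg ‖z‖)]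

lemma summable_norm_apply_sq (h : P.IsFactorisation (1 / 4) L L' e) (z : E) :
    Summable fun n => ‖L n z‖ ^ 2 := by
  refine summable_of_sum_range_le (c := 13 * ‖z‖ ^ 2) (fun n => sq_nonneg _) fun m => ?_
  have h_inner : ∑ n ∈ Finset.range m, (inner ℂ z (L' n (L n z))).re ≤ 11 / 2 * ‖z‖ ^ 2 :=
    calc _ = (inner ℂ z ((∑ n ∈ Finset.range m, L' n * L n) z)).re := by
          rw [sum_apply, inner_sum, Complex.re_sum]; rfl
      _ ≤ ‖z‖ * (11 / 2 * ‖z‖) := (Complex.re_le_norm _).trans <| (norm_inner_le_norm _ _).trans <|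
          by gcongr; exact le_of_opNorm_le _ (h.norm_sum_mul_le m) z
      _ = _ := by ring
  have h_geom : ∑ n ∈ Finset.range m, (1 / 2 : ℝ) ^ n ≤ 2 :=
    (summable_geometric_two.sum_le_tsum _ fun _ _ => by positivity).trans_eq tsum_geometric_two
  calc ∑ n ∈ Finset.range m, ‖L n z‖ ^ 2
      ≤ ∑ n ∈ Finset.range m, (2 * (inner ℂ z (L' n (L n z))).re + (1 / 2) ^ n * ‖z‖ ^ 2) :=
        Finset.sum_le_sum fun n _ => h.norm_apply_sq_le n z
    _ = 2 * ∑ n ∈ Finset.range m, (inner ℂ z (L' n (L n z))).re +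
          (∑ n ∈ Finset.range m, (1 / 2 : ℝ) ^ n) * ‖z‖ ^ 2 := by
        rw [Finset.sum_add_distrib, Finset.mul_sum, Finset.sum_mul]
    _ ≤ 13 * ‖z‖ ^ 2 := by nlinarith [sq_nonneg ‖z‖]

lemma tendsto_sum_mul (h : P.IsFactorisation (1 / 4) L L' e) (z : E) :
    Tendsto (fun m => ∑ n ∈ Finset.range m, L' n (L n z)) atTop (𝓝 (z - (∑' n, e n) z)) := by
  have h_error := h.summable_error.hasSum.mapL (ContinuousLinearMap.apply ℂ E z)
  refine ((h.tendsto_sum z).sub h_error.tendsto_sum_nat).congr fun m => ?_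
  simp [sum_apply, Finset.sum_add_distrib]

end IsFactorisation

variable [CompleteSpace F]

lemma hasSum_inner_adjoint_add {A : E →L[ℂ] F}
    (hA : ∀ z, HasSum (fun n => V n (L n z)) (A z)) {C : F →L[ℂ] E}
    (hC : HasSum (fun n => (L' n - star (L n)) ∘L adjoint (V n)) C) (z : E) (y : F) :
    HasSum (fun n => inner ℂ z (L' n (adjoint (V n) y))) (inner ℂ z ((adjoint A + C) y)) := by
  have hA_inner : HasSum (fun n => inner ℂ (V n (L n z)) y) (inner ℂ (A z) y) :=
    ((hA z).inner tendsto_const_nhds).congr fun s => sum_inner s _ _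
  have hC_inner := (hC.mapL (ContinuousLinearMap.apply ℂ E y)).mapL (innerSL ℂ z)
  rw [add_apply, inner_add_right, adjoint_inner_right]
  refine (hA_inner.add hC_inner).congr_fun fun n => ?_
  simp [star_eq_adjoint, adjoint_inner_right, inner_sub_right]

namespace IsSpreading

lemma norm_apply (hV : P.IsSpreading Q L L' V) (n : ℕ) (z : E) : ‖V n (L n z)‖ = ‖L n z‖ := by
  have h : inner ℂ (V n (L n z)) (V n (L n z)) = inner ℂ (L n z) (L n z) := by
    rw [← adjoint_inner_right, hV.adjoint_apply]
  rw [@norm_eq_sqrt_re_inner ℂ, @norm_eq_sqrt_re_inner ℂ, h]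

lemma summable_apply (hV : P.IsSpreading Q L L' V) {z : E}
    (hz : Summable fun n => ‖L n z‖ ^ 2) : Summable fun n => V n (L n z) := by
  have h_orth : OrthogonalFamily ℂ (fun n => (V n).range) fun n => (V n).range.subtypeₗᵢ := by
    rintro n m hnm ⟨_, x, rfl⟩ ⟨_, y, rfl⟩
    exact hV.inner_eq_zero n m hnm x y
  refine (h_orth.summable_iff_norm_sq_summable fun n => ⟨V n (L n z), L n z, rfl⟩).2 ?_
  exact hz.congr fun n => by rw [Submodule.coe_norm, hV.norm_apply]

lemma exists_hasSum (hV : P.IsSpreading Q L L' V) (hL : ∀ z, Summable fun n => ‖L n z‖ ^ 2) :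
    ∃ A ∈ triangular P Q, ∀ z, HasSum (fun n => V n (L n z)) (A z) := by
  have h_sum (z : E) := (hV.summable_apply (hL z)).hasSum
  let A : E →L[ℂ] F := continuousLinearMapOfTendsto
    (fun m => ∑ n ∈ Finset.range m, V n ∘L L n) (f := fun z => ∑' n, V n (L n z)) <|
    tendsto_pi_nhds.2 fun z => by simpa [sum_apply] using (h_sum z).tendsto_sum_nat
  refine ⟨A, mem_triangular_of_hasSum_inner hV.comp_mem fun z x => ?_, h_sum⟩
  exact (h_sum x).mapL (innerSL ℂ z)

lemma adjoint_apply_of_hasSum (hV : P.IsSpreading Q L L' V) {z : E} {y : F}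
    (hy : HasSum (fun n => V n (L n z)) y) (n : ℕ) : adjoint (V n) y = L n z := by
  have h_ne (i : ℕ) (hi : i ≠ n) : adjoint (V n) (V i (L i z)) = 0 := ext_inner_left ℂ fun w => by
    rw [adjoint_inner_right, hV.inner_eq_zero n i hi.symm, inner_zero_right]
  rw [← hV.adjoint_apply n z]
  exact (hy.mapL (adjoint (V n))).unique (hasSum_single n h_ne)

lemma summable_sub_star_comp (hV : P.IsSpreading Q L L' V)
    {ε : ℝ} (h : P.IsFactorisation ε L L' e) :
    Summable fun n => (L' n - star (L n)) ∘L adjoint (V n) := by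
  refine .of_norm_bounded (summable_geometric_two.mul_left ε) fun n => ?_
  have hV_norm : ‖adjoint (V n)‖ ≤ 1 := (LinearIsometryEquiv.norm_map _ _).trans_le (hV.norm_le n)
  calc ‖(L' n - star (L n)) ∘L adjoint (V n)‖
      ≤ ‖L' n - star (L n)‖ * ‖adjoint (V n)‖ := opNorm_comp_le _ _
    _ ≤ ‖L' n - star (L n)‖ := mul_le_of_le_one_right (norm_nonneg _) hV_norm
    _ ≤ ε * (1 / 2) ^ n := h.norm_sub_star_le n

lemma exists_comp_eq_one_sub (hV : P.IsSpreading Q L L' V)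
    (h : P.IsFactorisation (1 / 4) L L' e) :
    ∃ A ∈ triangular P Q, ∃ B ∈ triangular Q P, B ∘L A = 1 - ∑' n, e n ∧
      B - adjoint A ∈ approximable F E := by
  obtain ⟨A, hA_mem, hA⟩ := hV.exists_hasSum h.summable_norm_apply_sq
  have hC := hV.summable_sub_star_comp h
  have hB := hasSum_inner_adjoint_add hA hC.hasSum
  refine ⟨A, hA_mem, _, mem_triangular_of_hasSum_inner hV.comp_mem' hB, ?_, ?_⟩
  · refine ContinuousLinearMap.ext fun z => ext_inner_left ℂ fun w => ?_
    have h_lim := (hB w (A z)).tendsto_sum_nat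
    simp only [hV.adjoint_apply_of_hasSum (hA z), ← inner_sum] at h_lim
    exact tendsto_nhds_unique h_lim (tendsto_const_nhds.inner (h.tendsto_sum_mul z))
  · rw [add_sub_cancel_left]
    exact tsum_mem_approximable (fun n => comp_mem_finiteRank_left _
      (adjoint_mem_finiteRank (hV.mem_finiteRank n))) hC

end IsSpreading

lemma tsum_pow_mem_triangular {T : E →L[ℂ] E} (hT : T ∈ triangular P P) (hT_norm : ‖T‖ < 1) :
    ∑' n, T ^ n ∈ triangular P P := by
  have h_pow (n : ℕ) : T ^ n ∈ triangular P P := by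
    induction n with
    | zero => exact one_mem_triangular
    | succ n ih => rw [pow_succ]; exact mul_mem_triangular ih hT
  exact (isClosed_lowering P P 0).mem_of_tendsto (summable_geometric_of_norm_lt_one hT_norm).hasSum
    (Eventually.of_forall fun _ => sum_mem fun n _ => h_pow n)

lemma exists_isEmbedding_of_comp_eq_one_sub {A : E →L[ℂ] F} {B : F →L[ℂ] E} {T : E →L[ℂ] E}
    (hA : A ∈ triangular P Q) (hB : B ∈ triangular Q P) (hBA : B ∘L A = 1 - T)
    (hT : T ∈ approximable E E) (hT_norm : ‖T‖ < 1)
    (hB_adj : B - adjoint A ∈ approximable F E) : ∃ B', P.IsEmbedding Q A B' := by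
  have hT_mem : T ∈ triangular P P := by
    rw [← sub_sub_cancel 1 T, ← hBA]
    exact sub_mem one_mem_triangular (comp_mem_triangular hB hA)
  set R := ∑' n, T ^ n
  have hR : R * (1 - T) = 1 := (summable_geometric_of_norm_lt_one hT_norm).tsum_pow_mul_one_sub
  have hR_eq : R * T = R - 1 := by rw [← hR]; noncomm_ring
  refine ⟨R ∘L B, hA, comp_mem_triangular (tsum_pow_mem_triangular hT_mem hT_norm) hB, ?_, ?_⟩
  · rw [comp_assoc, hBA]
    exact hR
  · have h_split : R ∘L B - adjoint A = (R * T) ∘L B + (B - adjoint A) := by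
      rw [hR_eq, sub_comp, one_def, id_comp]
      abel
    rw [h_split]
    exact add_mem (comp_mem_approximable_right (comp_mem_approximable_left R hT) B) hB_adj

lemma IsThick.exists_isEmbedding [TopologicalSpace.SeparableSpace E] (hQ : Q.IsThick)
    (P : ParamNest E) : ∃ A B, P.IsEmbedding Q A B := by
  have h_dense : Dense (Submodule.span ℂ (range (TopologicalSpace.denseSeq E)) : Set E) :=
    (TopologicalSpace.denseRange_denseSeq E).mono Submodule.subset_span
  obtain ⟨L, L', e, h⟩ := P.exists_isFactorisation h_dense (ε := 1 / 4) (by norm_num)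
  obtain ⟨V, hV⟩ := hQ.exists_isSpreading h.mem h.mem'
  obtain ⟨A, hA, B, hB, hBA, hB_adj⟩ := hV.exists_comp_eq_one_sub h
  exact ⟨A, exists_isEmbedding_of_comp_eq_one_sub hA hB hBA
    (tsum_mem_approximable h.error_mem h.summable_error)
    (h.norm_tsum_error_le.trans_lt (by norm_num)) hB_adj⟩

end ParamNest

end Embedding

section Amplification

open ContinuousLinearMap

/-- The Hilbert space sum `E ⊕ E ⊕ ⋯` of countably many copies of `E`. -/
abbrev Amplification (E : Type*) [NormedAddCommGroup E] [InnerProductSpace ℂ E] :=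
  lp (fun _ : ℕ => E) 2

variable {E : Type*} [NormedAddCommGroup E] [InnerProductSpace ℂ E]

namespace Amplification

lemma hasSum_norm_sq (x : Amplification E) : HasSum (fun i => ‖x i‖ ^ 2) (‖x‖ ^ 2) := by
  simpa using lp.hasSum_norm (p := 2) (by norm_num) x

lemma norm_le_of_tsum_norm_sq_le {x : Amplification E} {C : ℝ} (hC : 0 ≤ C)
    (h : ∑' i, ‖x i‖ ^ 2 ≤ C ^ 2) : ‖x‖ ≤ C :=
  lp.norm_le_of_tsum_le (by norm_num) hC (by simpa using h)

lemma memℓp_tail (x : Amplification E) : Memℓp (fun i => x (i + 1)) 2 :=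
  memℓp_gen <| by simpa using (summable_nat_add_iff 1).2 (hasSum_norm_sq x).summable

/-- The projection of `E ⊕ E ⊕ ⋯` onto its first summand. -/
noncomputable def head : Amplification E →L[ℂ] E :=
  lp.evalCLM ℂ (fun _ => E) 2 0

/-- The backward shift of `E ⊕ E ⊕ ⋯`, which drops the first summand. -/
noncomputable def tail : Amplification E →L[ℂ] Amplification E :=
  LinearMap.mkContinuous
    { toFun x := ⟨fun i => x (i + 1), memℓp_tail x⟩
      map_add' _ _ := rfl
      map_smul' _ _ := rfl } 1 fun x => by
    rw [one_mul]
    refine norm_le_of_tsum_norm_sq_le (norm_nonneg x) ?_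
    rw [← (hasSum_norm_sq x).tsum_eq, (hasSum_norm_sq x).summable.tsum_eq_zero_add]
    exact le_add_of_nonneg_left (sq_nonneg _)

lemma head_apply (x : Amplification E) : head x = x 0 := rfl

lemma tail_apply (x : Amplification E) (i : ℕ) : tail x i = x (i + 1) := rfl

lemma tail_single_zero (y : E) : tail (lp.single 2 0 y : Amplification E) = 0 := by
  ext i
  simp [tail_apply]

lemma tail_single_succ (i : ℕ) (y : E) :
    tail (lp.single 2 (i + 1) y : Amplification E) = lp.single 2 i y := by
  ext j
  simp [tail_apply, Pi.single_apply]

lemma inner_single_left (i : ℕ) (y : E) (x : Amplification E) :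
    inner ℂ (lp.single 2 i y) x = inner ℂ y (x i) :=
  lp.inner_single_left (G := fun _ => E) i y x

instance [TopologicalSpace.SeparableSpace E] :
    TopologicalSpace.SeparableSpace (Amplification E) := by
  set S : Set (Amplification E) := ⋃ i, range (lp.single (E := fun _ => E) 2 i)
  have hS : TopologicalSpace.IsSeparable S := .iUnion fun i =>
    TopologicalSpace.isSeparable_range (lp.isometry_single i).continuous
  have h_closure : closure (Submodule.span ℂ S : Set (Amplification E)) = univ := by
    refine eq_univ_of_forall fun x => mem_closure_of_tendsto
      (lp.hasSum_single ENNReal.ofNat_ne_top x) (Eventually.of_forall fun s => ?_)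
    exact sum_mem fun i _ => Submodule.subset_span (mem_iUnion.2 ⟨i, mem_range_self _⟩)
  exact TopologicalSpace.isSeparable_univ_iff.1 (h_closure ▸ (hS.span (R := ℂ)).closure)

variable [CompleteSpace E]

lemma adjoint_head_apply (x : E) : adjoint head x = (lp.single 2 0 x : Amplification E) :=
  ext_inner_right ℂ fun y => by rw [adjoint_inner_left, head_apply, inner_single_left]

lemma adjoint_tail_apply_zero (x : Amplification E) : adjoint tail x 0 = 0 :=
  ext_inner_left (E := E) ℂ fun y => by
    calc inner ℂ y (adjoint tail x 0) = inner ℂ (lp.single 2 0 y) (adjoint tail x) :=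
          (inner_single_left 0 y _).symm
      _ = inner ℂ y 0 := by
          rw [adjoint_inner_right, tail_single_zero, inner_zero_left, inner_zero_right]

lemma adjoint_tail_apply_succ (x : Amplification E) (i : ℕ) : adjoint tail x (i + 1) = x i :=
  ext_inner_left (E := E) ℂ fun y => by
    calc inner ℂ y (adjoint tail x (i + 1)) = inner ℂ (lp.single 2 (i + 1) y) (adjoint tail x) :=
          (inner_single_left (i + 1) y _).symm
      _ = inner ℂ y (x i) := by
          rw [adjoint_inner_right, tail_single_succ, inner_single_left]

lemma head_adjoint_head_apply (x : E) : head (adjoint head x) = x := by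
  simp [adjoint_head_apply, head_apply]

lemma head_adjoint_tail_apply (x : Amplification E) : head (adjoint tail x) = 0 :=
  adjoint_tail_apply_zero x

lemma tail_adjoint_head_apply (x : E) : tail (adjoint head x) = 0 := by
  ext i
  simp [adjoint_head_apply, tail_apply]

lemma tail_adjoint_tail_apply (x : Amplification E) : tail (adjoint tail x) = x := by
  ext i
  rw [tail_apply, adjoint_tail_apply_succ]

lemma adjoint_head_add_adjoint_tail (x : Amplification E) :
    adjoint head (head x) + adjoint tail (tail x) = x := by
  ext i
  rw [lp.coeFn_add, Pi.add_apply, adjoint_head_apply]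
  cases i with
  | zero => simp [adjoint_tail_apply_zero, head_apply]
  | succ i => simp [adjoint_tail_apply_succ, tail_apply]

end Amplification

namespace ParamNest

variable {F : Type*} [NormedAddCommGroup F] [InnerProductSpace ℂ F]
  {P : ParamNest E} {Q : ParamNest F}

/-- The projection `P t ⊕ P t ⊕ ⋯` of the amplification. -/
noncomputable def amplifiedProj (P : ParamNest E) (t : ℝ) :
    Amplification E →L[ℂ] Amplification E :=
  lp.mapCLM 2 (fun _ => P t) zero_le_one fun _ =>
    opNorm_le_bound _ zero_le_one fun x => by rw [one_mul]; exact norm_proj_le t x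

lemma amplifiedProj_apply (P : ParamNest E) (t : ℝ) (x : Amplification E) (i : ℕ) :
    P.amplifiedProj t x i = P t (x i) := rfl

lemma continuous_amplifiedProj_apply (P : ParamNest E) (x : Amplification E) :
    Continuous fun t => P.amplifiedProj t x := by
  refine continuous_iff_continuousAt.2 fun s => tendsto_iff_norm_sub_tendsto_zero.2 ?_
  have h_norm_sq (t : ℝ) : ‖P.amplifiedProj t x - P.amplifiedProj s x‖ ^ 2 =
      ∑' i, ‖P t (x i) - P s (x i)‖ ^ 2 :=
    (Amplification.hasSum_norm_sq _).tsum_eq.symm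
  have h_bound (i : ℕ) (t : ℝ) : ‖‖P t (x i) - P s (x i)‖ ^ 2‖ ≤ 4 * ‖x i‖ ^ 2 := by
    have h_sub := norm_sub_le_of_le (norm_proj_le (P := P) t (x i)) (norm_proj_le (P := P) s (x i))
    rw [norm_pow, norm_norm]
    calc ‖P t (x i) - P s (x i)‖ ^ 2 ≤ (‖x i‖ + ‖x i‖) ^ 2 := by gcongr
      _ = 4 * ‖x i‖ ^ 2 := by ring
  have h_cont : Continuous fun t => ‖P.amplifiedProj t x - P.amplifiedProj s x‖ ^ 2 := by
    simp only [h_norm_sq]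
    refine continuous_tsum (fun i => ?_)
      ((Amplification.hasSum_norm_sq x).summable.mul_left 4) h_bound
    have := P.continuous_proj_apply (x i)
    fun_prop
  simpa [Real.sqrt_sq, Function.comp_def] using (h_cont.tendsto s).sqrt

/-- The nest of the projections `P t ⊕ P t ⊕ ⋯`. -/
noncomputable def amplification (P : ParamNest E) : ParamNest (Amplification E) where
  proj := P.amplifiedProj
  inner_proj_left t x y := by
    rw [lp.inner_eq_tsum, lp.inner_eq_tsum]
    exact tsum_congr fun i => P.inner_proj_left t (x i) (y i)
  proj_proj_of_ge s t hst x := by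
    ext i
    exact P.proj_proj_of_ge s t hst (x i)
  proj_of_nonpos t ht := by
    ext x i
    simp [amplifiedProj_apply, P.proj_of_nonpos t ht]
  proj_of_one_le t ht := by
    ext x i
    simp [amplifiedProj_apply, P.proj_of_one_le t ht]
  continuous_proj_apply := P.continuous_amplifiedProj_apply

lemma mem_triangular_of_commute {A : E →L[ℂ] F} (hA : ∀ t x, A (P t x) = Q t (A x)) :
    A ∈ triangular P Q :=
  mem_triangular_iff.2 fun t x => by rw [hA, proj_proj]

lemma adjoint_mem_triangular_of_commute [CompleteSpace E] [CompleteSpace F] {A : E →L[ℂ] F}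
    (hA : ∀ t x, A (P t x) = Q t (A x)) : adjoint A ∈ triangular Q P :=
  mem_triangular_of_commute fun t y => ext_inner_right ℂ fun x => by
    rw [adjoint_inner_left, P.inner_proj_left, adjoint_inner_left, hA, Q.inner_proj_left]

lemma head_amplification_apply (P : ParamNest E) (t : ℝ) (x : Amplification E) :
    Amplification.head (P.amplification t x) = P t (Amplification.head x) := rfl

lemma tail_amplification_apply (P : ParamNest E) (t : ℝ) (x : Amplification E) :
    Amplification.tail (P.amplification t x) = P.amplification t (Amplification.tail x) := rfl

end ParamNest

end Amplification

section Absorption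

open ContinuousLinearMap

variable {E F : Type*} [NormedAddCommGroup E] [InnerProductSpace ℂ E] [CompleteSpace E]
  [NormedAddCommGroup F] [InnerProductSpace ℂ F] [CompleteSpace F]

namespace ParamNest

/-- Triangular operators exhibiting `Q` as similar to `P ⊕ Q`: the column `(u, v)` is inverse to
the row `(u', v')`. -/
structure IsAbsorption (P : ParamNest E) (Q : ParamNest F) (u : F →L[ℂ] E) (u' : E →L[ℂ] F)
    (v v' : F →L[ℂ] F) : Prop where
  isEmbedding : P.IsEmbedding Q u' u
  mem : v ∈ triangular Q Q
  mem' : v' ∈ triangular Q Q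
  left_right (x : F) : u (v' x) = 0
  right_left (x : E) : v (u' x) = 0
  right_right (x : F) : v (v' x) = x
  sum_eq (x : F) : u' (u x) + v' (v x) = x

variable {P : ParamNest E} {Q : ParamNest F}

lemma IsEmbedding.apply_apply {A : E →L[ℂ] F} {B : F →L[ℂ] E} (h : P.IsEmbedding Q A B) (x : E) :
    B (A x) = x :=
  congr($h.comp_eq_one x)

lemma IsEmbedding.comp_adjoint {G : Type*} [NormedAddCommGroup G] [InnerProductSpace ℂ G]
    [CompleteSpace G] {R : ParamNest G} {A : G →L[ℂ] F} {B : F →L[ℂ] G}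
    (h : R.IsEmbedding Q A B) {C : G →L[ℂ] E} (hC : ∀ t x, C (R t x) = P t (C x))
    (hC_right : ∀ x, C (adjoint C x) = x) : P.IsEmbedding Q (A ∘L adjoint C) (C ∘L B) where
  mem := comp_mem_triangular h.mem (adjoint_mem_triangular_of_commute hC)
  mem' := comp_mem_triangular (mem_triangular_of_commute hC) h.mem'
  comp_eq_one := by
    ext x
    simp [h.apply_apply, hC_right]
  sub_adjoint_mem := by
    rw [adjoint_comp, adjoint_adjoint, ← comp_sub]
    exact comp_mem_approximable_left _ h.sub_adjoint_mem

lemma IsThick.exists_isEmbedding_pair [TopologicalSpace.SeparableSpace E] (hQ : Q.IsThick)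
    (P : ParamNest E) : ∃ (A₁ A₂ : E →L[ℂ] F) (B₁ B₂ : F →L[ℂ] E), P.IsEmbedding Q A₁ B₁ ∧
      P.IsEmbedding Q A₂ B₂ ∧ B₁ ∘L A₂ = 0 ∧ B₂ ∘L A₁ = 0 := by
  obtain ⟨A, B, h⟩ := hQ.exists_isEmbedding P.amplification
  refine ⟨_, _, _, _, h.comp_adjoint P.head_amplification_apply
    Amplification.head_adjoint_head_apply,
    h.comp_adjoint (C := Amplification.head ∘L Amplification.tail) (fun t x => rfl) fun x => ?_,
    ?_, ?_⟩
  · simp [adjoint_comp, Amplification.tail_adjoint_tail_apply,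
      Amplification.head_adjoint_head_apply]
  · ext x
    simp [adjoint_comp, h.apply_apply, Amplification.head_adjoint_tail_apply]
  · ext x
    simp [h.apply_apply, Amplification.tail_adjoint_head_apply]

/- The Eilenberg swindle: an embedded copy of `P ⊕ P ⊕ ⋯` absorbs one more copy of `P`. -/
lemma IsEmbedding.isAbsorption {A : Amplification E →L[ℂ] F} {B : F →L[ℂ] Amplification E}
    (h : P.amplification.IsEmbedding Q A B) :
    P.IsAbsorption Q (Amplification.head ∘L B) (A ∘L adjoint Amplification.head)
      (A ∘L Amplification.tail ∘L B + (1 - A ∘L B))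
      (A ∘L adjoint Amplification.tail ∘L B + (1 - A ∘L B)) where
  isEmbedding := h.comp_adjoint P.head_amplification_apply Amplification.head_adjoint_head_apply
  mem := add_mem (comp_mem_triangular h.mem (comp_mem_triangular
      (mem_triangular_of_commute P.tail_amplification_apply) h.mem'))
    (sub_mem one_mem_triangular (comp_mem_triangular h.mem h.mem'))
  mem' := add_mem (comp_mem_triangular h.mem (comp_mem_triangular
      (adjoint_mem_triangular_of_commute P.tail_amplification_apply) h.mem'))
    (sub_mem one_mem_triangular (comp_mem_triangular h.mem h.mem'))
  left_right x := by
    simp [h.apply_apply, Amplification.head_adjoint_tail_apply]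
  right_left x := by
    simp [h.apply_apply, Amplification.tail_adjoint_head_apply]
  right_right x := by
    simp [h.apply_apply, Amplification.tail_adjoint_tail_apply]
  sum_eq x := by
    have h_sum := congr(A $(Amplification.adjoint_head_add_adjoint_tail (B x)))
    rw [map_add] at h_sum
    simp [h.apply_apply, ← add_assoc, h_sum]

lemma IsThick.exists_isAbsorption [TopologicalSpace.SeparableSpace E] (hQ : Q.IsThick)
    (P : ParamNest E) : ∃ u u' v v', P.IsAbsorption Q u u' v v' :=
  let ⟨_, _, h⟩ := hQ.exists_isEmbedding P.amplification
  ⟨_, _, _, _, h.isAbsorption⟩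

/- Pełczyński decomposition: `Q ≅ P ⊕ Q ≅ Q ⊕ P ≅ P`. -/
lemma IsAbsorption.exists_equiv {u : F →L[ℂ] E} {u' : E →L[ℂ] F} {v v' : F →L[ℂ] F}
    {w : E →L[ℂ] F} {w' : F →L[ℂ] E} {z z' : E →L[ℂ] E} (h : P.IsAbsorption Q u u' v v')
    (k : Q.IsAbsorption P w w' z z') :
    ∃ S : F ≃L[ℂ] E, (S : F →L[ℂ] E) ∈ triangular Q P ∧ (S.symm : E →L[ℂ] F) ∈ triangular P Q := by
  refine ⟨.equivOfInverse (w' ∘L v + z' ∘L u) (v' ∘L w + u' ∘L z) (fun x => ?_) fun x => ?_,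
    add_mem (comp_mem_triangular k.isEmbedding.mem h.mem)
      (comp_mem_triangular k.mem' h.isEmbedding.mem'),
    add_mem (comp_mem_triangular h.mem' k.isEmbedding.mem')
      (comp_mem_triangular h.isEmbedding.mem k.mem)⟩
  · simp [k.isEmbedding.apply_apply, k.left_right, k.right_left, k.right_right, add_comm (v' _),
      h.sum_eq]
  · simp [h.isEmbedding.apply_apply, h.left_right, h.right_left, h.right_right, k.sum_eq]

end ParamNest

end Absorption

section ToParamNest

open ContinuousLinearMap

namespace ContinuousNest

variable {𝒩 : ContinuousNest H}

lemma N_N_of_le {s t : ℝ} (hs : s ∈ Icc (0 : ℝ) 1) (ht : t ∈ Icc (0 : ℝ) 1) (hst : s ≤ t) (x : H) :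
    𝒩.N t (𝒩.N s x) = 𝒩.N s x := by
  obtain ⟨y, hy⟩ : ∃ y, 𝒩.N t y = 𝒩.N s x := by
    rcases hst.eq_or_lt with rfl | hst
    · exact ⟨x, rfl⟩
    · exact (𝒩.range_lt s t hs ht hst).le ⟨x, rfl⟩
  rw [← hy]
  exact congr($(𝒩.idem t ht) y)

/-- The extension of a continuous nest to the whole real line, constant outside `[0, 1]`. -/
noncomputable def toParamNest (𝒩 : ContinuousNest H) : ParamNest H where
  proj t := 𝒩.N (projIcc 0 1 zero_le_one t)
  inner_proj_left t x y := by
    rw [← adjoint_inner_right, ← star_eq_adjoint, (𝒩.selfAdjoint _ (Subtype.prop _)).star_eq]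
  proj_proj_of_ge s t hst x :=
    N_N_of_le (Subtype.prop _) (Subtype.prop _) (monotone_projIcc _ hst) x
  proj_of_nonpos t ht := by rw [projIcc_of_le_left _ ht, 𝒩.N_zero]
  proj_of_one_le t ht := by rw [projIcc_of_right_le _ ht, 𝒩.N_one]
  continuous_proj_apply x := (𝒩.contOn x).comp_continuous
    (continuous_subtype_val.comp (continuous_projIcc (h := zero_le_one))) fun _ => Subtype.prop _

lemma toParamNest_apply (𝒩 : ContinuousNest H) {t : ℝ} (ht : t ∈ Icc (0 : ℝ) 1) :
    𝒩.toParamNest t = 𝒩.N t := by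
  change 𝒩.N (projIcc 0 1 zero_le_one t) = 𝒩.N t
  rw [projIcc_of_mem _ ht]

lemma exists_mem_intervalSpace_ne_zero (𝒩 : ContinuousNest H) {s t : ℝ}
    (hs : s ∈ Icc (0 : ℝ) 1) (ht : t ∈ Icc (0 : ℝ) 1) (hst : s < t) :
    ∃ x ∈ 𝒩.toParamNest.intervalSpace s t, x ≠ 0 := by
  obtain ⟨_, ⟨x, rfl⟩, hx⟩ := SetLike.exists_of_lt (𝒩.range_lt s t hs ht hst)
  refine ⟨𝒩.N t x - 𝒩.N s x, ?_, fun h_zero => hx ⟨x, (sub_eq_zero.1 h_zero).symm⟩⟩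
  rw [← toParamNest_apply 𝒩 hs, ← toParamNest_apply 𝒩 ht, ← sub_apply]
  exact ParamNest.proj_sub_proj_mem_intervalSpace hst.le x

lemma isThick_toParamNest (𝒩 : ContinuousNest H) : 𝒩.toParamNest.IsThick := by
  intro s t hs hst ht h_fin
  obtain ⟨u, hu_mono, hu_mem, -⟩ := exists_seq_strictMono_tendsto' hst
  have hu_Icc (n : ℕ) : u n ∈ Icc (0 : ℝ) 1 :=
    ⟨hs.trans (hu_mem n).1.le, (hu_mem n).2.le.trans ht⟩
  choose x hx hx_ne using fun n : ℕ =>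
    𝒩.exists_mem_intervalSpace_ne_zero (hu_Icc n) (hu_Icc (n + 1)) (hu_mono n.lt_succ_self)
  have h_inner {m n : ℕ} (hmn : m < n) : inner ℂ (x m) (x n) = 0 :=
    ParamNest.inner_eq_zero_of_mem_intervalSpace (hu_mono.monotone hmn) (hx m) (hx n)
  have h_indep : LinearIndependent ℂ x := by
    refine linearIndependent_of_ne_zero_of_inner_eq_zero hx_ne fun m n hmn => ?_
    rcases hmn.lt_or_gt with hmn | hnm
    · exact h_inner hmn
    · exact inner_eq_zero_symm.1 (h_inner hnm)
  have hx_mem (n : ℕ) : x n ∈ 𝒩.toParamNest.intervalSpace s t :=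
    ParamNest.intervalSpace_mono (hu_mem n).1.le (hu_mem (n + 1)).2.le (hx n)
  have h_indep' : LinearIndependent ℂ
      fun n => (⟨x n, hx_mem n⟩ : 𝒩.toParamNest.intervalSpace s t) :=
    LinearIndependent.of_comp (Submodule.subtype _) h_indep
  exact h_indep'.finite.false

end ContinuousNest

end ToParamNest

section EssNorm

open ContinuousLinearMap

lemma essNorm_nonneg (T : H →L[ℂ] H) : 0 ≤ essNorm T :=
  Metric.infDist_nonneg

lemma essNorm_le_norm_sub (T : H →L[ℂ] H) {K : H →L[ℂ] H} (hK : IsCompactOperator K) :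
    essNorm T ≤ ‖T - K‖ := by
  rw [← dist_eq_norm]
  exact Metric.infDist_le_dist_of_mem hK

lemma exists_norm_sub_lt_of_essNorm_lt {T : H →L[ℂ] H} {r : ℝ} (h : essNorm T < r) :
    ∃ K : H →L[ℂ] H, IsCompactOperator K ∧ ‖T - K‖ < r := by
  obtain ⟨K, hK, hK_dist⟩ := (Metric.infDist_lt_iff ⟨0, isCompactOperator_zero⟩).1 h
  exact ⟨K, hK, dist_eq_norm T K ▸ hK_dist⟩

lemma essNorm_le_of_isCompactOperator_sub {S T : H →L[ℂ] H} (h : IsCompactOperator (S - T)) :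
    essNorm S ≤ essNorm T := by
  refine le_of_forall_gt_imp_ge_of_dense fun r hr => ?_
  obtain ⟨K, hK, hK_norm⟩ := exists_norm_sub_lt_of_essNorm_lt hr
  have h_sub : S - (K + (S - T)) = T - K := by abel
  have hK' : IsCompactOperator ⇑(K + (S - T)) := hK.add h
  exact (essNorm_le_norm_sub S hK').trans (h_sub ▸ hK_norm.le)

lemma essNorm_mul_le (S T : H →L[ℂ] H) : essNorm (S * T) ≤ essNorm S * essNorm T := by
  refine le_mul_of_forall_lt₀ fun a ha b hb => ?_
  obtain ⟨K, hK, hK_norm⟩ := exists_norm_sub_lt_of_essNorm_lt ha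
  obtain ⟨L, hL, hL_norm⟩ := exists_norm_sub_lt_of_essNorm_lt hb
  have h_compact : IsCompactOperator ⇑(S * L + K * (T - L)) :=
    (hL.clm_comp S).add (hK.comp_clm (T - L))
  calc essNorm (S * T) ≤ ‖S * T - (S * L + K * (T - L))‖ := essNorm_le_norm_sub _ h_compact
    _ = ‖(S - K) * (T - L)‖ := by congr 1; noncomm_ring
    _ ≤ ‖S - K‖ * ‖T - L‖ := norm_mul_le _ _
    _ ≤ a * b :=
      mul_le_mul hK_norm.le hL_norm.le (norm_nonneg _) ((norm_nonneg _).trans hK_norm.le)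

lemma essNorm_mul_mul_le {a b : H →L[ℂ] H} (ha : essNorm a ≤ 1) (hb : essNorm b ≤ 1)
    (T : H →L[ℂ] H) : essNorm (a * T * b) ≤ essNorm T := by
  have h_mul : essNorm (a * T) ≤ essNorm T :=
    (essNorm_mul_le a T).trans (mul_le_of_le_one_left (essNorm_nonneg T) ha)
  exact (essNorm_mul_le _ b).trans (mul_le_of_le_one_right (essNorm_nonneg _) hb) |>.trans h_mul

lemma essNorm_compression_le {a b D D' : H →L[ℂ] H} (ha : essNorm a ≤ 1) (hb : essNorm b ≤ 1)
    (hDa : IsCompactOperator (D * a - a * D')) (hDb : IsCompactOperator (b * D - D' * b))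
    (T : H →L[ℂ] H) : essNorm (D * (a * T * b) * D) ≤ essNorm (D' * T * D') := by
  have h_sub : D * (a * T * b) * D - a * (D' * T * D') * b =
      (D * a - a * D') * (T * b * D) + (a * D' * T) * (b * D - D' * b) := by noncomm_ring
  have h_compact : IsCompactOperator ⇑(D * (a * T * b) * D - a * (D' * T * D') * b) := by
    rw [h_sub]
    exact (hDa.comp_clm (T * b * D)).add (hDb.clm_comp (a * D' * T))
  exact (essNorm_le_of_isCompactOperator_sub h_compact).trans (essNorm_mul_mul_le ha hb _)

end EssNorm

section EssentialIsometry

open ContinuousLinearMap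

variable {E F : Type*} [NormedAddCommGroup E] [InnerProductSpace ℂ E]
  [NormedAddCommGroup F] [InnerProductSpace ℂ F]

lemma starProjection_mem_finiteRank (W : Submodule ℂ E) [FiniteDimensional ℂ W] :
    W.starProjection ∈ finiteRank E E := by
  rw [(stdOrthonormalBasis ℂ W).starProjection_eq_sum_rankOne]
  exact sum_mem fun i _ => rankOne_mem_finiteRank _ _

variable [CompleteSpace E] [CompleteSpace F]

lemma norm_apply_le_of_norm_adjoint_comp_sub_le {A : E →L[ℂ] F} {K : E →L[ℂ] E} {η : ℝ}
    (hK : ‖adjoint A ∘L A - 1 - K‖ ≤ η) {x : E} (hx : K x = 0) : ‖A x‖ ≤ (1 + η) * ‖x‖ := by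
  have hη : 0 ≤ η := (norm_nonneg _).trans hK
  have h_sub : adjoint A (A x) = x + (adjoint A ∘L A - 1 - K) x := by simp [hx]
  have h_adj : ‖adjoint A (A x)‖ ≤ (1 + η) * ‖x‖ := by
    rw [h_sub, add_mul, one_mul]
    exact norm_add_le_of_le le_rfl (le_of_opNorm_le _ hK x)
  have h_sq : ‖A x‖ ^ 2 ≤ (1 + η) * ‖x‖ ^ 2 :=
    calc ‖A x‖ ^ 2 = RCLike.re (inner ℂ (adjoint A (A x)) x) :=
          apply_norm_sq_eq_inner_adjoint_left A x
      _ ≤ ‖adjoint A (A x)‖ * ‖x‖ := re_inner_le_norm _ _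
      _ ≤ (1 + η) * ‖x‖ * ‖x‖ := by gcongr
      _ = (1 + η) * ‖x‖ ^ 2 := by ring
  refine le_of_sq_le_sq (h_sq.trans ?_) (by positivity)
  rw [mul_pow]
  gcongr
  exact le_self_pow₀ (by linarith) two_ne_zero

lemma exists_mem_finiteRank_norm_sub_le {A : E →L[ℂ] F}
    (hA : adjoint A ∘L A - 1 ∈ approximable E E) {η : ℝ} (hη : 0 < η) :
    ∃ K ∈ finiteRank E F, ‖A - K‖ ≤ 1 + η := by
  obtain ⟨K, hK, hK_dist⟩ := Metric.mem_closure_iff.1 hA η hη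
  rw [dist_eq_norm] at hK_dist
  have := finiteDimensional_range_of_mem_finiteRank (adjoint_mem_finiteRank hK)
  set W : Submodule ℂ E := (adjoint K).range
  have h_sub : A - A ∘L W.starProjection = A ∘L Wᗮ.starProjection := by
    rw [Submodule.starProjection_orthogonal, comp_sub, comp_id]
  refine ⟨_, comp_mem_finiteRank_left A (starProjection_mem_finiteRank W), ?_⟩
  rw [h_sub]
  refine opNorm_le_bound _ (by positivity) fun x => ?_
  have hx : K (Wᗮ.starProjection x) = 0 := by
    have h_mem := (orthogonal_range (adjoint K)).le (Wᗮ.starProjection_apply_mem x)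
    rwa [adjoint_adjoint] at h_mem
  calc ‖A (Wᗮ.starProjection x)‖ ≤ (1 + η) * ‖Wᗮ.starProjection x‖ :=
        norm_apply_le_of_norm_adjoint_comp_sub_le hK_dist.le hx
    _ ≤ (1 + η) * ‖x‖ := by gcongr; exact Wᗮ.norm_starProjection_apply_le x

lemma essNorm_le_one_of_forall_exists {T : H →L[ℂ] H}
    (h : ∀ η > 0, ∃ K ∈ approximable H H, ‖T - K‖ ≤ 1 + η) : essNorm T ≤ 1 :=
  le_of_forall_pos_le_add fun η hη =>
    let ⟨_, hK, hK_norm⟩ := h η hη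
    (essNorm_le_norm_sub T (isCompactOperator_of_mem_approximable hK)).trans hK_norm

namespace ParamNest

section

variable {P : ParamNest E} {Q : ParamNest F}

lemma proj_adjoint_proj_apply {A : E →L[ℂ] F} (hA : A ∈ triangular P Q) (t : ℝ) (y : F) :
    P t (adjoint A (Q t y)) = P t (adjoint A y) :=
  ext_inner_right ℂ fun x => by
    rw [P.inner_proj_left, P.inner_proj_left, adjoint_inner_left, adjoint_inner_left,
      Q.inner_proj_left, mem_triangular_iff.1 hA]

lemma proj_comp_sub_comp_proj_mem_approximable {A : E →L[ℂ] F} {B : F →L[ℂ] E}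
    (hA : A ∈ triangular P Q) (hB : B ∈ triangular Q P) (hBA : B - adjoint A ∈ approximable F E)
    (t : ℝ) : P t ∘L B - B ∘L Q t ∈ approximable F E := by
  have h_eq : P t ∘L B - B ∘L Q t = P t ∘L (B - adjoint A) ∘L (1 - Q t) := by
    ext y
    simp [proj_adjoint_proj_apply hA, mem_triangular_iff.1 hB]
  rw [h_eq]
  exact comp_mem_approximable_left _ (comp_mem_approximable_right hBA _)

namespace IsEmbedding

variable {A : E →L[ℂ] F} {B : F →L[ℂ] E}

lemma sub_adjoint_mem' (h : P.IsEmbedding Q A B) : A - adjoint B ∈ approximable E F := by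
  have h_adj := neg_mem (adjoint_mem_approximable h.sub_adjoint_mem)
  rwa [map_sub, adjoint_adjoint, neg_sub] at h_adj

lemma adjoint_comp_sub_one_mem (h : P.IsEmbedding Q A B) :
    adjoint A ∘L A - 1 ∈ approximable E E := by
  rw [← h.comp_eq_one, ← sub_comp, ← neg_sub B, neg_comp]
  exact neg_mem (comp_mem_approximable_right h.sub_adjoint_mem A)

end IsEmbedding

end

namespace IsEmbedding

variable {P Q : ParamNest H} {A B : H →L[ℂ] H}

lemma essNorm_left_le_one (h : P.IsEmbedding Q A B) : essNorm A ≤ 1 :=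
  essNorm_le_one_of_forall_exists fun _ hη =>
    let ⟨K, hK, hK_norm⟩ := exists_mem_finiteRank_norm_sub_le h.adjoint_comp_sub_one_mem hη
    ⟨K, finiteRank_le_approximable hK, hK_norm⟩

lemma essNorm_right_le_one (h : P.IsEmbedding Q A B) : essNorm B ≤ 1 :=
  essNorm_le_one_of_forall_exists fun η hη => by
    obtain ⟨K, hK, hK_norm⟩ := exists_mem_finiteRank_norm_sub_le h.adjoint_comp_sub_one_mem hη
    refine ⟨adjoint K + (B - adjoint A), add_mem
      (finiteRank_le_approximable (adjoint_mem_finiteRank hK)) h.sub_adjoint_mem, ?_⟩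
    have h_sub : B - (adjoint K + (B - adjoint A)) = adjoint (A - K) := by rw [map_sub]; abel
    rwa [h_sub, LinearIsometryEquiv.norm_map]

lemma isCompactOperator_interval_mul_sub (h : P.IsEmbedding Q A B) (s t : ℝ) :
    IsCompactOperator ((Q t - Q s) * A - A * (P t - P s)) := by
  have h_proj (r : ℝ) : Q r * A - A * P r ∈ approximable H H :=
    proj_comp_sub_comp_proj_mem_approximable h.mem' h.mem h.sub_adjoint_mem' r
  have h_eq : (Q t - Q s) * A - A * (P t - P s) = (Q t * A - A * P t) - (Q s * A - A * P s) := by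
    noncomm_ring
  rw [h_eq]
  exact isCompactOperator_of_mem_approximable (sub_mem (h_proj t) (h_proj s))

lemma isCompactOperator_mul_interval_sub (h : P.IsEmbedding Q A B) (s t : ℝ) :
    IsCompactOperator (B * (Q t - Q s) - (P t - P s) * B) := by
  have h_proj (r : ℝ) : P r * B - B * Q r ∈ approximable H H :=
    proj_comp_sub_comp_proj_mem_approximable h.mem h.mem' h.sub_adjoint_mem r
  have h_eq : B * (Q t - Q s) - (P t - P s) * B = (P s * B - B * Q s) - (P t * B - B * Q t) := by
    noncomm_ring
  rw [h_eq]
  exact isCompactOperator_of_mem_approximable (sub_mem (h_proj s) (h_proj t))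

lemma essNorm_interval_conj_le (h : P.IsEmbedding Q A B) (s t : ℝ) (X : H →L[ℂ] H) :
    essNorm ((Q t - Q s) * (A * X * B) * (Q t - Q s)) ≤
      essNorm ((P t - P s) * X * (P t - P s)) :=
  essNorm_compression_le h.essNorm_left_le_one h.essNorm_right_le_one
    (h.isCompactOperator_interval_mul_sub s t) (h.isCompactOperator_mul_interval_sub s t) X

lemma essNorm_interval_le (h : P.IsEmbedding Q A B) (s t : ℝ) {X Z : H →L[ℂ] H}
    (hZ : B * Z * A = X) : essNorm ((P t - P s) * X * (P t - P s)) ≤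
      essNorm ((Q t - Q s) * Z * (Q t - Q s)) := by
  have h_swap {S T : H →L[ℂ] H} (hST : IsCompactOperator (S - T)) : IsCompactOperator (T - S) := by
    have := hST.neg
    rwa [← neg_sub S T]
  rw [← hZ]
  exact essNorm_compression_le h.essNorm_right_le_one h.essNorm_left_le_one
    (h_swap (h.isCompactOperator_mul_interval_sub s t))
    (h_swap (h.isCompactOperator_interval_mul_sub s t)) Z

lemma essNorm_interval_conj (h : P.IsEmbedding Q A B) (s t : ℝ) (X : H →L[ℂ] H) :
    essNorm ((Q t - Q s) * (A * X * B) * (Q t - Q s)) =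
      essNorm ((P t - P s) * X * (P t - P s)) := by
  refine (h.essNorm_interval_conj_le s t X).antisymm (h.essNorm_interval_le s t ?_)
  have hBA : B * A = 1 := h.comp_eq_one
  calc B * (A * X * B) * A = (B * A) * X * (B * A) := by noncomm_ring
    _ = X := by rw [hBA, one_mul, mul_one]

end IsEmbedding

end ParamNest

end EssentialIsometry

section StableIdeals

open ContinuousLinearMap ParamNest

variable {𝒩 ℳ : ContinuousNest H} {I : Set (H →L[ℂ] H)}

lemma opRefines_of_subset {E : Type*} [NormedAddCommGroup E] [InnerProductSpace ℂ E]
    {P₁ P₂ : Set (E →L[ℂ] E)} (h : P₁ ⊆ P₂) : OpRefines P₁ P₂ :=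
  fun T hT => ⟨T, h hT, by rw [sub_self]; exact isPositive_zero⟩

namespace ContinuousNest

lemma mem_alg_iff {T : H →L[ℂ] H} :
    T ∈ 𝒩.alg ↔ T ∈ triangular 𝒩.toParamNest 𝒩.toParamNest := by
  have h_iff (t : ℝ) : (1 - 𝒩.N t) * T * 𝒩.N t = 0 ↔ ∀ x, 𝒩.N t (T (𝒩.N t x)) = T (𝒩.N t x) :=
    ContinuousLinearMap.ext_iff.trans <| forall_congr' fun x =>
      (sub_eq_zero (a := T (𝒩.N t x))).trans eq_comm
  rw [mem_triangular_iff]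
  refine ⟨fun hT t => (h_iff _).1 (hT _ (Subtype.prop _)), fun hT t ht => (h_iff t).2 ?_⟩
  rw [← toParamNest_apply 𝒩 ht]
  exact hT t

lemma N_injOn (𝒩 : ContinuousNest H) : InjOn 𝒩.N (Icc 0 1) := by
  have h_mono : StrictMonoOn (fun t => (𝒩.N t).range) (Icc 0 1) :=
    fun s hs t ht => 𝒩.range_lt s t hs ht
  exact fun s hs t ht hst => h_mono.injOn hs ht (congrArg (·.range) hst)

lemma le_of_isPositive_sub {s t : ℝ} (hs : s ∈ Icc (0 : ℝ) 1) (ht : t ∈ Icc (0 : ℝ) 1)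
    (h : IsPositive (𝒩.N t - 𝒩.N s)) : s ≤ t := by
  by_contra! hts
  obtain ⟨x, hx, hx_ne⟩ := 𝒩.exists_mem_intervalSpace_ne_zero ht hs hts
  rw [← toParamNest_apply 𝒩 ht, ← toParamNest_apply 𝒩 hs] at h
  have h_nonneg := h.re_inner_nonneg_left x
  rw [sub_apply, hx.1, hx.2, zero_sub, inner_neg_left, map_neg, inner_self_eq_norm_sq] at h_nonneg
  have := norm_pos_iff.2 hx_ne
  nlinarith

lemma IsAuto.exists_orderIso {θ : (H →L[ℂ] H) → H →L[ℂ] H} (hθ : 𝒩.IsAuto θ) :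
    ∃ σ : Icc (0 : ℝ) 1 ≃o Icc (0 : ℝ) 1, ∀ t : Icc (0 : ℝ) 1, θ (𝒩.N t) = 𝒩.N (σ t) := by
  obtain ⟨⟨h_maps, h_inj, h_surj⟩, h_pos⟩ := hθ
  have h_exists (t : Icc (0 : ℝ) 1) : ∃ r : Icc (0 : ℝ) 1, θ (𝒩.N t) = 𝒩.N r :=
    let ⟨r, hr, h⟩ := h_maps ⟨t, t.2, rfl⟩
    ⟨⟨r, hr⟩, h.symm⟩
  choose f hf using h_exists
  have hf_mono : StrictMono f := by
    refine Monotone.strictMono_of_injective (fun s t hst => ?_) fun s t hst => Subtype.ext ?_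
    · refine 𝒩.le_of_isPositive_sub (f s).2 (f t).2 ?_
      rw [← hf, ← hf]
      exact h_pos s t s.2 t.2 hst
    · refine 𝒩.N_injOn s.2 t.2 (h_inj ⟨s, s.2, rfl⟩ ⟨t, t.2, rfl⟩ ?_)
      rw [hf, hf, hst]
  have hf_surj : Function.Surjective f := fun r => by
    obtain ⟨_, ⟨t, ht, rfl⟩, htr⟩ := h_surj ⟨r, r.2, rfl⟩
    exact ⟨⟨t, ht⟩, Subtype.ext (𝒩.N_injOn (f ⟨t, ht⟩).2 r.2 ((hf ⟨t, ht⟩).symm.trans htr))⟩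
  exact ⟨hf_mono.orderIsoOfSurjective f hf_surj, hf⟩

/-- The same chain of projections as `𝒩`, traversed along the order isomorphism `σ` of `[0, 1]`:
every order automorphism of the nest arises in this way. -/
noncomputable def reparametrize (𝒩 : ContinuousNest H) (σ : Icc (0 : ℝ) 1 ≃o Icc (0 : ℝ) 1) :
    ContinuousNest H where
  N t := 𝒩.N (σ (projIcc 0 1 zero_le_one t))
  idem _ _ := 𝒩.idem _ (Subtype.prop _)
  selfAdjoint _ _ := 𝒩.selfAdjoint _ (Subtype.prop _)
  range_lt _ _ hs ht hst := 𝒩.range_lt _ _ (Subtype.prop _) (Subtype.prop _)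
    (σ.strictMono (strictMonoOn_projIcc _ hs ht hst))
  N_zero := by
    have h_zero : σ (projIcc 0 1 zero_le_one 0) = (0 : Icc (0 : ℝ) 1) := by
      rw [projIcc_left]
      exact σ.map_bot
    rw [h_zero]
    exact 𝒩.N_zero
  N_one := by
    have h_one : σ (projIcc 0 1 zero_le_one 1) = (1 : Icc (0 : ℝ) 1) := by
      rw [projIcc_right]
      exact σ.map_top
    rw [h_one]
    exact 𝒩.N_one
  contOn ξ := (𝒩.contOn ξ).comp
    (continuous_subtype_val.comp (σ.continuous.comp continuous_projIcc)).continuousOn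
    fun _ _ => Subtype.prop _

lemma reparametrize_N_coe (σ : Icc (0 : ℝ) 1 ≃o Icc (0 : ℝ) 1) (t : Icc (0 : ℝ) 1) :
    (𝒩.reparametrize σ).N t = 𝒩.N (σ t) := by
  change 𝒩.N (σ (projIcc 0 1 zero_le_one t)) = 𝒩.N (σ t)
  rw [projIcc_val]

lemma alg_reparametrize (σ : Icc (0 : ℝ) 1 ≃o Icc (0 : ℝ) 1) :
    (𝒩.reparametrize σ).alg = 𝒩.alg := by
  ext T
  refine ⟨fun hT t ht => ?_, fun hT t _ => hT _ (Subtype.prop _)⟩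
  have h := hT (σ.symm ⟨t, ht⟩) (Subtype.prop _)
  rwa [reparametrize_N_coe, σ.apply_symm_apply] at h

lemma IsIdeal.mul_mul_mem (hI : 𝒩.IsIdeal I) {A B X : H →L[ℂ] H} (hA : A ∈ 𝒩.alg) (hX : X ∈ I)
    (hB : B ∈ 𝒩.alg) : A * X * B ∈ I := by
  obtain ⟨-, -, -, -, h_mul⟩ := hI
  exact (h_mul B hB _ (h_mul A hA X hX).1).2

lemma IsIdeal.exists_essNorm_interval_le [TopologicalSpace.SeparableSpace H] (hI : 𝒩.IsIdeal I)
    {X Y : H →L[ℂ] H} (hX : X ∈ I) (hY : Y ∈ I) : ∃ Z ∈ I, ∀ E, 𝒩.IsInterval E →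
      essNorm (E * X * E) ≤ essNorm (E * Z * E) ∧ essNorm (E * Y * E) ≤ essNorm (E * Z * E) := by
  obtain ⟨A₁, A₂, B₁, B₂, h₁, h₂, h₁₂, h₂₁⟩ :=
    𝒩.isThick_toParamNest.exists_isEmbedding_pair 𝒩.toParamNest
  have h_comp₁ : B₁ * A₁ = 1 := h₁.comp_eq_one
  have h_comp₂ : B₂ * A₂ = 1 := h₂.comp_eq_one
  have h_comp₁₂ : B₁ * A₂ = 0 := h₁₂
  have h_comp₂₁ : B₂ * A₁ = 0 := h₂₁
  have hZX : B₁ * (A₁ * X * B₁ + A₂ * Y * B₂) * A₁ = X :=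
    calc B₁ * (A₁ * X * B₁ + A₂ * Y * B₂) * A₁ =
          B₁ * A₁ * X * (B₁ * A₁) + B₁ * A₂ * Y * (B₂ * A₁) := by noncomm_ring
      _ = X := by simp [h_comp₁, h_comp₁₂]
  have hZY : B₂ * (A₁ * X * B₁ + A₂ * Y * B₂) * A₂ = Y :=
    calc B₂ * (A₁ * X * B₁ + A₂ * Y * B₂) * A₂ =
          B₂ * A₁ * X * (B₁ * A₂) + B₂ * A₂ * Y * (B₂ * A₂) := by noncomm_ring
      _ = Y := by simp [h_comp₂, h_comp₂₁]
  refine ⟨A₁ * X * B₁ + A₂ * Y * B₂, hI.2.2.1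
    _ (hI.mul_mul_mem (mem_alg_iff.2 h₁.mem) hX (mem_alg_iff.2 h₁.mem'))
    _ (hI.mul_mul_mem (mem_alg_iff.2 h₂.mem) hY (mem_alg_iff.2 h₂.mem')), ?_⟩
  rintro _ ⟨s, t, hs, hst, ht, rfl⟩
  rw [← toParamNest_apply 𝒩 ⟨hs, hst.trans ht⟩, ← toParamNest_apply 𝒩 ⟨hs.trans hst, ht⟩]
  exact ⟨h₁.essNorm_interval_le s t hZX, h₂.essNorm_interval_le s t hZY⟩

lemma IsStableIdeal.conj_mem (hI : 𝒩.IsStableIdeal I) {S : H ≃L[ℂ] H}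
    (hS : ∀ T ∈ 𝒩.alg, (S : H →L[ℂ] H) * T * (S.symm : H →L[ℂ] H) ∈ 𝒩.alg)
    (hS' : ∀ T ∈ 𝒩.alg, (S.symm : H →L[ℂ] H) * T * (S : H →L[ℂ] H) ∈ 𝒩.alg)
    {X : H →L[ℂ] H} (hX : X ∈ I) : (S : H →L[ℂ] H) * X * (S.symm : H →L[ℂ] H) ∈ I := by
  have h_alg : (fun T => (S : H →L[ℂ] H) * T * (S.symm : H →L[ℂ] H)) '' 𝒩.alg = 𝒩.alg := by
    refine Subset.antisymm (image_subset_iff.2 fun T hT => hS T hT) fun T hT => ⟨_, hS' T hT, ?_⟩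
    ext x
    simp
  exact (hI.2.2 S.toUnit h_alg).subset (mem_image_of_mem _ hX)

lemma IsStableIdeal.mul_mul_mem_of_equiv (hI : 𝒩.IsStableIdeal I) (h_alg : ℳ.alg = 𝒩.alg)
    {S : H ≃L[ℂ] H} (hS : (S : H →L[ℂ] H) ∈ triangular ℳ.toParamNest 𝒩.toParamNest)
    (hS' : (S.symm : H →L[ℂ] H) ∈ triangular 𝒩.toParamNest ℳ.toParamNest)
    {A B X : H →L[ℂ] H} (hA : A ∈ triangular 𝒩.toParamNest ℳ.toParamNest)
    (hB : B ∈ triangular ℳ.toParamNest 𝒩.toParamNest) (hX : X ∈ I) : A * X * B ∈ I := by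
  have h_conj : (S : H →L[ℂ] H) * A * X * (B * (S.symm : H →L[ℂ] H)) ∈ I :=
    hI.1.mul_mul_mem (mem_alg_iff.2 (comp_mem_triangular hS hA)) hX
      (mem_alg_iff.2 (comp_mem_triangular hB hS'))
  have h_mem := hI.conj_mem (S := S.symm) (fun T hT => ?_) (fun T hT => ?_) h_conj
  · convert h_mem using 1
    ext x
    simp
  · rw [← h_alg, mem_alg_iff]
    exact comp_mem_triangular (comp_mem_triangular hS' (mem_alg_iff.1 hT)) hS
  · rw [← h_alg] at hT
    exact mem_alg_iff.2 (comp_mem_triangular (comp_mem_triangular hS (mem_alg_iff.1 hT)) hS')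

lemma IsStableIdeal.exists_essNorm_interval_eq [TopologicalSpace.SeparableSpace H]
    (hI : 𝒩.IsStableIdeal I) (σ : Icc (0 : ℝ) 1 ≃o Icc (0 : ℝ) 1) {X : H →L[ℂ] H} (hX : X ∈ I) :
    ∃ Y ∈ I, ∀ s t : Icc (0 : ℝ) 1,
      essNorm ((𝒩.N (σ t) - 𝒩.N (σ s)) * Y * (𝒩.N (σ t) - 𝒩.N (σ s))) =
        essNorm ((𝒩.N t - 𝒩.N s) * X * (𝒩.N t - 𝒩.N s)) := by
  have h𝒩 := 𝒩.isThick_toParamNest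
  have hℳ := (𝒩.reparametrize σ).isThick_toParamNest
  obtain ⟨_, _, _, _, h_abs⟩ := hℳ.exists_isAbsorption 𝒩.toParamNest
  obtain ⟨_, _, _, _, h_abs'⟩ := h𝒩.exists_isAbsorption (𝒩.reparametrize σ).toParamNest
  obtain ⟨S, hS, hS'⟩ := h_abs.exists_equiv h_abs'
  obtain ⟨A, B, hAB⟩ := hℳ.exists_isEmbedding 𝒩.toParamNest
  refine ⟨A * X * B, hI.mul_mul_mem_of_equiv (alg_reparametrize σ) hS hS' hAB.mem hAB.mem' hX,
    fun s t => ?_⟩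
  rw [← reparametrize_N_coe, ← reparametrize_N_coe, ← toParamNest_apply _ s.2,
    ← toParamNest_apply _ t.2, ← toParamNest_apply _ s.2, ← toParamNest_apply _ t.2]
  exact hAB.essNorm_interval_conj s t X

/-- The family of intervals `P_{X,ε}`: those `E` with `‖E X E‖ₑ < ε`. -/
def smallIntervals (𝒩 : ContinuousNest H) (X : H →L[ℂ] H) (ε : ℝ) : Set (H →L[ℂ] H) :=
  {E | 𝒩.IsInterval E ∧ essNorm (E * X * E) < ε}

lemma IsIdeal.exists_smallIntervals_subset [TopologicalSpace.SeparableSpace H] (hI : 𝒩.IsIdeal I)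
    {X Y : H →L[ℂ] H} (hX : X ∈ I) (hY : Y ∈ I) (ε δ : ℝ) : ∃ Z ∈ I,
      𝒩.smallIntervals Z (min ε δ) ⊆ 𝒩.smallIntervals X ε ∩ 𝒩.smallIntervals Y δ := by
  obtain ⟨Z, hZ, h_le⟩ := hI.exists_essNorm_interval_le hX hY
  refine ⟨Z, hZ, fun E ⟨hE, hE_lt⟩ => ?_⟩
  obtain ⟨hEX, hEY⟩ := h_le E hE
  exact ⟨⟨hE, hEX.trans_lt (hE_lt.trans_le (min_le_left ε δ))⟩,
    hE, hEY.trans_lt (hE_lt.trans_le (min_le_right ε δ))⟩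

lemma autoImage_smallIntervals {θ : (H →L[ℂ] H) → H →L[ℂ] H} {σ : Icc (0 : ℝ) 1 ≃o Icc (0 : ℝ) 1}
    (hθ : ∀ t : Icc (0 : ℝ) 1, θ (𝒩.N t) = 𝒩.N (σ t)) {X Y : H →L[ℂ] H}
    (hXY : ∀ s t : Icc (0 : ℝ) 1,
      essNorm ((𝒩.N (σ t) - 𝒩.N (σ s)) * Y * (𝒩.N (σ t) - 𝒩.N (σ s))) =
        essNorm ((𝒩.N t - 𝒩.N s) * X * (𝒩.N t - 𝒩.N s))) (ε : ℝ) :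
    𝒩.autoImage θ (𝒩.smallIntervals X ε) = 𝒩.smallIntervals Y ε := by
  ext E
  constructor
  · rintro ⟨s, t, hs, hst, ht, ⟨-, h_lt⟩, rfl⟩
    lift s to Icc (0 : ℝ) 1 using ⟨hs, hst.trans ht⟩
    lift t to Icc (0 : ℝ) 1 using ⟨hs.trans hst, ht⟩
    rw [hθ, hθ]
    exact ⟨⟨σ s, σ t, (σ s).2.1, σ.monotone hst, (σ t).2.2, rfl⟩, (hXY s t).trans_lt h_lt⟩
  · rintro ⟨⟨a, b, ha, hab, hb, rfl⟩, h_lt⟩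
    obtain ⟨s, hs⟩ := σ.surjective ⟨a, ha, hab.trans hb⟩
    obtain ⟨t, ht⟩ := σ.surjective ⟨b, ha.trans hab, hb⟩
    obtain rfl : (σ s : ℝ) = a := congrArg Subtype.val hs
    obtain rfl : (σ t : ℝ) = b := congrArg Subtype.val ht
    have hst : s ≤ t := σ.le_iff_le.1 hab
    refine ⟨s, t, s.2.1, hst, t.2.2, ⟨⟨s, t, s.2.1, hst, t.2.2, rfl⟩, ?_⟩, by rw [hθ, hθ]⟩
    exact (hXY s t).symm.trans_lt h_lt

end ContinuousNest

end StableIdeals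

/-- For a stable ideal `I`, the collection of all families
`P_{X,ε} = {E interval : ‖EXE‖ₑ < ε}` (for `X ∈ I`, `ε > 0`) is a stable net of intervals. -/
theorem stmt7 {H : Type*} [NormedAddCommGroup H] [InnerProductSpace ℂ H] [CompleteSpace H]
    [TopologicalSpace.SeparableSpace H] (hH : ¬FiniteDimensional ℂ H)
    (𝒩 : ContinuousNest H) (I : Set (H →L[ℂ] H)) (hI : 𝒩.IsStableIdeal I) :
    𝒩.IsStableNet {P | ∃ X ∈ I, ∃ ε : ℝ, 0 < ε ∧
      P = {E | 𝒩.IsInterval E ∧ essNorm (E * X * E) < ε}} := by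
  refine ⟨⟨?_, ?_⟩, ?_⟩
  · rintro P ⟨_, _, _, _, rfl⟩ E hE
    exact hE.1
  · rintro P ⟨X, hX, ε, hε, rfl⟩ Q ⟨Y, hY, δ, hδ, rfl⟩
    obtain ⟨Z, hZ, h_subset⟩ := hI.1.exists_smallIntervals_subset hX hY ε δ
    exact ⟨_, ⟨Z, hZ, min ε δ, lt_min hε hδ, rfl⟩,
      opRefines_of_subset (h_subset.trans inter_subset_left),
      opRefines_of_subset (h_subset.trans inter_subset_right)⟩
  · rintro θ hθ P ⟨X, hX, ε, hε, rfl⟩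
    obtain ⟨σ, hσ⟩ := hθ.exists_orderIso
    obtain ⟨Y, hY, hXY⟩ := hI.exists_essNorm_interval_eq σ hX
    exact ⟨Y, hY, ε, hε, ContinuousNest.autoImage_smallIntervals hσ hXY ε⟩
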